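/- arXiv:0912.3844 — 4 statements merged into one kernel-verified Lean document; each statement's English description precedes it below -/
import Mathlib

section
/- For every real a > 0, the improper integral lim_{T→∞} ∫₁^T sin(a·x) · (ln x)/x dx exists and equals −(π/2)·(γ + ln a) + a · Σ_{n=0}^∞ (−1)^n · a^{2n} / ((2n+1)! · (2n+1)²), where γ is the Euler–Mascheroni constant. -/
open MeasureTheory Filter


lemma aux_log_exp_int : ∫ t in Set.Ioi (0:ℝ), Real.log t * Real.exp (-t) = -Real.eulerMascheroniConstant := by
  have h1 := Complex.hasDerivAt_GammaIntegral (s := 1) (by simp)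
  have h2 : HasDerivAt Complex.Gamma (∫ t : ℝ in Set.Ioi 0, (t:ℂ) ^ ((1:ℂ) - 1) * (Real.log t * Real.exp (-t))) 1 := by
    apply h1.congr_of_eventuallyEq
    have : {s : ℂ | 0 < s.re} ∈ nhds (1:ℂ) :=
      (isOpen_lt continuous_const Complex.continuous_re).mem_nhds (by simp)
    filter_upwards [this] with s hs using Complex.Gamma_eq_integral hs
  have h3 := h2.unique Complex.hasDerivAt_Gamma_one
  have h4 : (∫ t : ℝ in Set.Ioi 0, (t:ℂ) ^ ((1:ℂ) - 1) * (Real.log t * Real.exp (-t)))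
      = ((∫ t in Set.Ioi (0:ℝ), Real.log t * Real.exp (-t) : ℝ) : ℂ) := by
    rw [← integral_complex_ofReal]
    congr 1; ext t; simp
  rw [h4] at h3
  exact_mod_cast h3

lemma aux_log_exp_integrable :
    IntegrableOn (fun t : ℝ => Real.log t * Real.exp (-t)) (Set.Ioi 0) := by
  by_contra h
  have h1 := integral_undef h
  rw [aux_log_exp_int] at h1
  linarith [Real.one_half_lt_eulerMascheroniConstant]

lemma aux_laplace (x : ℝ) (hx : 0 < x) :
    ∫ t in Set.Ioi (0:ℝ), Real.exp (-(x*t)) * (Real.log t + Real.eulerMascheroniConstant) = - Real.log x / x := by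
  have h := integral_comp_mul_left_Ioi
    (fun u => Real.log u * Real.exp (-u) + (Real.eulerMascheroniConstant - Real.log x) * Real.exp (-u)) 0 hx
  have e1 : IntegrableOn (fun t : ℝ => Real.exp (-t)) (Set.Ioi 0) := integrableOn_exp_neg_Ioi 0
  rw [mul_zero, integral_add aux_log_exp_integrable (e1.const_mul _), integral_const_mul,
    aux_log_exp_int, integral_exp_neg_Ioi] at h
  have : ∫ t in Set.Ioi (0:ℝ), Real.exp (-(x*t)) * (Real.log t + Real.eulerMascheroniConstant)
    = ∫ t in Set.Ioi (0:ℝ), (Real.log (x*t) * Real.exp (-(x*t)) + (Real.eulerMascheroniConstant - Real.log x) * Real.exp (-(x*t))) := by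
    apply setIntegral_congr_fun measurableSet_Ioi
    intro t ht
    have ht : 0 < t := ht
    simp only
    rw [Real.log_mul hx.ne' ht.ne']; ring
  rw [this, h]
  simp; field_simp; ring

lemma aux_integrable (a : ℝ) (ha : 0 < a) (g : ℝ) (hg : |g| ≤ 1) :
    IntegrableOn (fun t : ℝ => (Real.log t + g) / (a^2+t^2)) (Set.Ioi 0) := by
  have hm : Measurable (fun t : ℝ => (Real.log t + g) / (a^2+t^2)) := by fun_prop
  rw [← Set.Ioc_union_Ioi_eq_Ioi (zero_le_one (α := ℝ)), integrableOn_union]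
  constructor
  · have h1 : IntegrableOn (fun t : ℝ => (Real.log t + g) * (a^2)⁻¹) (Set.Ioc 0 1) := by
      have := (intervalIntegral.intervalIntegrable_log' (a := 0) (b := 1)).add
        (intervalIntegrable_const (c := g))
      exact ((intervalIntegrable_iff_integrableOn_Ioc_of_le zero_le_one).1 this).mul_const _
    refine Integrable.mono h1 hm.aestronglyMeasurable (Eventually.of_forall fun t => ?_)
    rw [div_eq_mul_inv, norm_mul, norm_mul]
    gcongr
    rw [Real.norm_of_nonneg (by positivity), Real.norm_of_nonneg (by positivity)]
    gcongr
    nlinarith [sq_nonneg t]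
  · have h1 : IntegrableOn (fun t : ℝ => 3 * t ^ (-3/2:ℝ)) (Set.Ioi 1) :=
      (integrableOn_Ioi_rpow_of_lt (by norm_num) zero_lt_one).const_mul _
    refine h1.mono' hm.aestronglyMeasurable ?_
    refine (ae_restrict_iff' measurableSet_Ioi).2 (Eventually.of_forall fun t ht => ?_)
    have ht : 1 < t := ht
    have ht0 : 0 < t := by linarith
    have hs : 1 ≤ √t := Real.one_le_sqrt.2 ht.le
    have hl : Real.log t ≤ 2 * √t := by
      have h := Real.log_le_sub_one_of_pos (x := √t) (by linarith)
      rw [Real.log_sqrt ht0.le] at h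
      linarith
    have hl0 := Real.log_nonneg ht.le
    have e : t ^ (-3/2:ℝ) = √t / t^2 := by
      rw [Real.sqrt_eq_rpow, ← Real.rpow_natCast, ← Real.rpow_sub ht0]; norm_num
    rw [e, norm_div, Real.norm_of_nonneg (by positivity : 0 ≤ a^2+t^2), ← mul_div_assoc]
    gcongr
    · rw [Real.norm_eq_abs, abs_le]
      rw [abs_le] at hg
      constructor <;> linarith
    · nlinarith [sq_nonneg a]

lemma aux_gamma_abs : |Real.eulerMascheroniConstant| ≤ 1 := by
  rw [abs_le]
  constructor <;> linarith [Real.one_half_lt_eulerMascheroniConstant, Real.eulerMascheroniConstant_lt_two_thirds]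

lemma aux_log_zero : ∫ t in Set.Ioi (0:ℝ), Real.log t / (1+t^2) = 0 := by
  have h := integral_comp_rpow_Ioi (fun t : ℝ => Real.log t / (1+t^2)) (p := -1) (by norm_num)
  have : ∫ x in Set.Ioi (0:ℝ), (|(-1:ℝ)| * x ^ ((-1:ℝ) - 1)) • (fun t : ℝ => Real.log t / (1+t^2)) (x ^ (-1:ℝ))
      = ∫ x in Set.Ioi (0:ℝ), -(Real.log x / (1+x^2)) := by
    apply setIntegral_congr_fun measurableSet_Ioi
    intro x hx
    have hx : 0 < x := hx
    have e : x ^ ((-1:ℝ) - 1) = (x^2)⁻¹ := by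
      rw [← Real.rpow_natCast, ← Real.rpow_neg hx.le]; norm_num
    simp only [e, Real.rpow_neg_one, Real.log_inv, smul_eq_mul, abs_neg, abs_one]
    field_simp
    ring
  rw [this, integral_neg] at h
  linarith

lemma aux_main_value (a : ℝ) (ha : 0 < a) :
    ∫ t in Set.Ioi (0:ℝ), (Real.log t + Real.eulerMascheroniConstant) * (a / (a^2+t^2)) = Real.pi/2 * (Real.eulerMascheroniConstant + Real.log a) := by
  have h := integral_comp_mul_left_Ioi (fun t => (Real.log t + Real.eulerMascheroniConstant) * (a / (a^2+t^2))) 0 ha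
  have h1 : IntegrableOn (fun t : ℝ => Real.log t / (1+t^2)) (Set.Ioi 0) := by
    simpa using aux_integrable 1 one_pos 0 (by simp)
  have h2 : IntegrableOn (fun t : ℝ => (1+t^2)⁻¹) (Set.Ioi 0) := integrable_inv_one_add_sq.integrableOn
  have : ∫ x in Set.Ioi (0:ℝ), (fun t => (Real.log t + Real.eulerMascheroniConstant) * (a / (a^2+t^2))) (a*x)
      = ∫ x in Set.Ioi (0:ℝ), a⁻¹ * (Real.log x / (1+x^2) + (Real.eulerMascheroniConstant + Real.log a) * (1+x^2)⁻¹) := by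
    apply setIntegral_congr_fun measurableSet_Ioi
    intro x hx
    have hx : 0 < x := hx
    simp only
    rw [Real.log_mul ha.ne' hx.ne']
    have : a^2+(a*x)^2 = a^2*(1+x^2) := by ring
    rw [this]
    field_simp
    ring
  rw [this, integral_const_mul, integral_add h1 (h2.const_mul _), aux_log_zero, integral_const_mul,
    integral_Ioi_inv_one_add_sq, mul_zero, smul_eq_mul] at h
  have := mul_left_cancel₀ (inv_ne_zero ha.ne') h
  rw [← this]; simp; ring

lemma aux_inner (a : ℝ) (ha : 0 < a) (T t : ℝ) :
    ∫ x in (0:ℝ)..T, Real.sin (a*x) * Real.exp (-(x*t)) =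
      (a - Real.exp (-(T*t)) * (a * Real.cos (a*T) + t * Real.sin (a*T))) / (a^2+t^2) := by
  have hd : a^2+t^2 ≠ 0 := by positivity
  have : ∀ x ∈ Set.uIcc 0 T, HasDerivAt (fun x => - Real.exp (-(x*t)) * (a * Real.cos (a*x) + t * Real.sin (a*x)) / (a^2+t^2))
      (Real.sin (a*x) * Real.exp (-(x*t))) x := by
    intro x _
    have hax : HasDerivAt (fun x => a * x) a x := by simpa using (hasDerivAt_id x).const_mul a
    have hxt : HasDerivAt (fun x => -(x * t)) (-t) x := by
      have := ((hasDerivAt_id x).mul_const t).fun_neg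
      simpa using this
    have := ((hxt.exp.neg).mul ((hax.cos.const_mul a).add (hax.sin.const_mul t))).div_const (a^2+t^2)
    refine this.congr_deriv ?_
    field_simp
    simp
    ring_nf
  rw [intervalIntegral.integral_eq_sub_of_hasDerivAt this (by apply Continuous.intervalIntegrable; fun_prop)]
  simp
  ring

lemma aux_bound_int (T t : ℝ) (hT : 0 < T) (ht : 0 < t) :
    ∫ x in Set.Ioc 0 T, (T + t^2 * (x * Real.exp (-(x*t)))) ≤ T^2 + 1 := by
  rw [← intervalIntegral.integral_of_le hT.le]
  have : ∀ x ∈ Set.uIcc 0 T, HasDerivAt (fun x => T * x - (1 + x * t) * Real.exp (-(x*t)))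
      (T + t^2 * (x * Real.exp (-(x*t)))) x := by
    intro x _
    have hx : HasDerivAt (fun x => x * t) t x := by simpa using (hasDerivAt_id x).mul_const t
    have hTx : HasDerivAt (fun x => T * x) T x := by simpa using (hasDerivAt_id x).const_mul T
    have := hTx.fun_sub ((hx.const_add 1).fun_mul hx.fun_neg.exp)
    refine this.congr_deriv ?_
    ring
  rw [intervalIntegral.integral_eq_sub_of_hasDerivAt this (by apply Continuous.intervalIntegrable; fun_prop)]
  have : 0 < (1 + T * t) * Real.exp (-(T*t)) := by positivity
  simp
  nlinarith

lemma aux_fubini (a : ℝ) (ha : 0 < a) (T : ℝ) (hT : 0 < T) :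
    Integrable (Function.uncurry fun x t : ℝ => Real.sin (a*x) * Real.exp (-(x*t)) * (Real.log t + Real.eulerMascheroniConstant))
      ((volume.restrict (Set.Ioc 0 T)).prod (volume.restrict (Set.Ioi 0))) := by
  have hm : StronglyMeasurable (Function.uncurry fun x t : ℝ =>
      Real.sin (a*x) * Real.exp (-(x*t)) * (Real.log t + Real.eulerMascheroniConstant)) := by
    apply Measurable.stronglyMeasurable
    unfold Function.uncurry
    fun_prop
  rw [integrable_prod_iff' hm.aestronglyMeasurable]
  constructor
  · refine Eventually.of_forall fun t => ?_
    refine Continuous.integrableOn_Ioc (f := fun x : ℝ => Real.sin (a*x) * Real.exp (-(x*t)) * (Real.log t + Real.eulerMascheroniConstant)) ?_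
    fun_prop
  · have hb := ((aux_integrable 1 one_pos Real.eulerMascheroniConstant aux_gamma_abs).norm).mul_const (a * (T^2+1))
    refine hb.mono' hm.norm.integral_prod_left'.aestronglyMeasurable ?_
    refine (ae_restrict_iff' measurableSet_Ioi).2 (Eventually.of_forall fun t ht => ?_)
    have ht : 0 < t := ht
    rw [Real.norm_of_nonneg (integral_nonneg fun _ => norm_nonneg _)]
    have h1 : ∫ x in Set.Ioc 0 T, ‖Real.sin (a*x) * Real.exp (-(x*t)) * (Real.log t + Real.eulerMascheroniConstant)‖
        ≤ ∫ x in Set.Ioc 0 T, (‖(Real.log t + Real.eulerMascheroniConstant) / (1^2+t^2)‖ * a) * (T + t^2 * (x * Real.exp (-(x*t)))) := by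
      apply setIntegral_mono_on
      · apply Continuous.integrableOn_Ioc; fun_prop
      · apply Continuous.integrableOn_Ioc; fun_prop
      · exact measurableSet_Ioc
      · intro x hx
        have hx0 : 0 < x := hx.1
        have hs : |Real.sin (a*x)| ≤ a * x := by
          have := Real.abs_sin_le_abs (x := a * x)
          rwa [abs_of_pos (mul_pos ha hx0)] at this
        have he : Real.exp (-(x*t)) ≤ 1 := Real.exp_le_one_iff.2 (by nlinarith [mul_pos hx0 ht])
        have hxe : x * Real.exp (-(x*t)) ≤ T := by
          nlinarith [hx.2, Real.exp_pos (-(x*t))]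
        rw [norm_mul, norm_mul, norm_div, Real.norm_of_nonneg (Real.exp_pos _).le,
          Real.norm_of_nonneg (by positivity : 0 ≤ 1^2+t^2), Real.norm_eq_abs (Real.sin _)]
        calc |Real.sin (a*x)| * Real.exp (-(x*t)) * ‖Real.log t + Real.eulerMascheroniConstant‖
            ≤ (a * x) * Real.exp (-(x*t)) * ‖Real.log t + Real.eulerMascheroniConstant‖ := by gcongr
          _ = (‖Real.log t + Real.eulerMascheroniConstant‖ / (1^2+t^2) * a) * (x * Real.exp (-(x*t)) + t^2 * (x * Real.exp (-(x*t)))) := by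
              field_simp
          _ ≤ _ := by gcongr
    refine h1.trans ?_
    rw [integral_const_mul, ← mul_assoc]
    gcongr
    exact aux_bound_int T t hT ht

lemma aux_swap (a : ℝ) (ha : 0 < a) (T : ℝ) (hT : 0 < T) :
    ∫ x in (0:ℝ)..T, Real.sin (a * x) * Real.log x / x =
     - ∫ t in Set.Ioi (0:ℝ), (Real.log t + Real.eulerMascheroniConstant) *
      ((a - Real.exp (-(T*t)) * (a * Real.cos (a*T) + t * Real.sin (a*T))) / (a^2+t^2)) := by
  have h := integral_integral_swap (aux_fubini a ha T hT)
  have e1 : ∫ t in Set.Ioi (0:ℝ), ∫ x in Set.Ioc 0 T, Real.sin (a*x) * Real.exp (-(x*t)) * (Real.log t + Real.eulerMascheroniConstant)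
     = ∫ t in Set.Ioi (0:ℝ), (Real.log t + Real.eulerMascheroniConstant) *
      ((a - Real.exp (-(T*t)) * (a * Real.cos (a*T) + t * Real.sin (a*T))) / (a^2+t^2)) := by
    congr 1; ext t
    rw [integral_mul_const, ← aux_inner a ha, intervalIntegral.integral_of_le hT.le, mul_comm]
  rw [← e1, ← h, intervalIntegral.integral_of_le hT.le, ← integral_neg]
  apply setIntegral_congr_fun measurableSet_Ioc
  intro x hx
  simp only [mul_assoc]
  rw [integral_const_mul, aux_laplace x hx.1]
  ring

lemma aux_limit (a : ℝ) (ha : 0 < a) :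
    Tendsto (fun T : ℝ => ∫ x in (0:ℝ)..T, Real.sin (a * x) * Real.log x / x) atTop
      (nhds (-(Real.pi / 2) * (Real.eulerMascheroniConstant + Real.log a))) := by
  have key : Tendsto (fun T : ℝ => ∫ t in Set.Ioi (0:ℝ), (Real.log t + Real.eulerMascheroniConstant) *
      ((a - Real.exp (-(T*t)) * (a * Real.cos (a*T) + t * Real.sin (a*T))) / (a^2+t^2))) atTop
      (nhds (∫ t in Set.Ioi (0:ℝ), (Real.log t + Real.eulerMascheroniConstant) * (a / (a^2+t^2)))) := by
    apply tendsto_integral_filter_of_dominated_convergence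
      (fun t => ‖(Real.log t + Real.eulerMascheroniConstant) / (a^2+t^2)‖ * (2 * a + 1))
    · exact Eventually.of_forall fun T => Measurable.aestronglyMeasurable (by fun_prop)
    · filter_upwards [eventually_ge_atTop 1] with T hT
      refine (ae_restrict_iff' measurableSet_Ioi).2 (Eventually.of_forall fun t ht => ?_)
      have ht : 0 < t := ht
      have he : Real.exp (-(T*t)) ≤ 1 := Real.exp_le_one_iff.2 (by nlinarith)
      have het : Real.exp (-(T*t)) * t ≤ 1 := by
        have h1 : T * t + 1 ≤ Real.exp (T*t) := Real.add_one_le_exp _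
        rw [Real.exp_neg, inv_mul_le_iff₀ (Real.exp_pos _)]
        nlinarith
      have e : (Real.log t + Real.eulerMascheroniConstant) *
        ((a - Real.exp (-(T*t)) * (a * Real.cos (a*T) + t * Real.sin (a*T))) / (a^2+t^2))
        = (Real.log t + Real.eulerMascheroniConstant) / (a^2+t^2) *
          (a - Real.exp (-(T*t)) * a * Real.cos (a*T) - Real.exp (-(T*t)) * t * Real.sin (a*T)) := by ring
      rw [e, norm_mul]
      gcongr
      have b1 : |Real.exp (-(T*t)) * a * Real.cos (a*T)| ≤ a := by
        rw [abs_mul, abs_of_pos (by positivity)]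
        calc _ ≤ 1 * a * 1 := by
              gcongr; exact Real.abs_cos_le_one _
          _ = a := by ring
      have b2 : |Real.exp (-(T*t)) * t * Real.sin (a*T)| ≤ 1 := by
        rw [abs_mul, abs_of_pos (by positivity)]
        calc _ ≤ (1:ℝ) * 1 := by
              gcongr; exact Real.abs_sin_le_one _
          _ = 1 := by ring
      rw [Real.norm_eq_abs]
      rw [abs_le] at *
      constructor <;> linarith [b1.1, b1.2, b2.1, b2.2]
    · exact (aux_integrable a ha Real.eulerMascheroniConstant aux_gamma_abs).norm.mul_const _
    · refine (ae_restrict_iff' measurableSet_Ioi).2 (Eventually.of_forall fun t ht => ?_)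
      have ht : 0 < t := ht
      have h0 : Tendsto (fun T : ℝ => Real.exp (-(T*t)) * (a * Real.cos (a*T) + t * Real.sin (a*T))) atTop (nhds 0) := by
        have hz : Tendsto (fun T : ℝ => Real.exp (-(T*t)) * (a + t)) atTop (nhds 0) := by
          have := (Real.tendsto_exp_neg_atTop_nhds_zero.comp (tendsto_id.atTop_mul_const ht)).mul_const (a+t)
          simpa using this
        refine squeeze_zero_norm (fun T => ?_) hz
        rw [norm_mul, Real.norm_of_nonneg (Real.exp_pos _).le]
        gcongr
        refine (norm_add_le _ _).trans ?_
        rw [norm_mul, norm_mul, Real.norm_of_nonneg ha.le, Real.norm_of_nonneg ht.le]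
        have := Real.abs_cos_le_one (a*T)
        have := Real.abs_sin_le_one (a*T)
        simp only [Real.norm_eq_abs]
        nlinarith
      have := (((tendsto_const_nhds (x := a)).sub h0).div_const (a^2+t^2)).const_mul (Real.log t + Real.eulerMascheroniConstant)
      simpa using this
  rw [aux_main_value a ha] at key
  have := key.neg
  rw [← neg_mul] at this
  refine this.congr' ?_
  filter_upwards [eventually_gt_atTop 0] with T hT
  rw [aux_swap a ha T hT]

lemma aux_pow_log (n : ℕ) : ∫ x in (0:ℝ)..1, x^n * Real.log x = - 1 / ((n:ℝ)+1)^2 := by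
  have hn : (n:ℝ)+1 ≠ 0 := by positivity
  have hc : Continuous (fun x : ℝ => x^n * (x * Real.log x) / (n+1) - x^(n+1)/((n:ℝ)+1)^2) := by
    have := Real.continuous_mul_log
    fun_prop
  rw [intervalIntegral.integral_eq_sub_of_hasDerivAt_of_le zero_le_one hc.continuousOn
    (f' := fun x => x^n * Real.log x)]
  · simp; ring
  · intro x hx
    have hx0 : x ≠ 0 := hx.1.ne'
    have h1 : HasDerivAt (fun x : ℝ => x^(n+1) * Real.log x / (n+1) - x^(n+1)/((n:ℝ)+1)^2) (x^n * Real.log x) x := by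
      have hp := hasDerivAt_pow (n+1) x
      have := ((hp.fun_mul (Real.hasDerivAt_log hx0)).div_const ((n:ℝ)+1)).fun_sub (hp.div_const (((n:ℝ)+1)^2))
      refine this.congr_deriv ?_
      push_cast
      field_simp
      ring
    convert! h1 using 1
    ext y; ring
  · exact intervalIntegral.intervalIntegrable_log'.continuousOn_mul (by fun_prop)

lemma aux_series (a : ℝ) (ha : 0 < a) :
    HasSum (fun n : ℕ => -(a * ((-1 : ℝ) ^ n * a ^ (2 * n) / ((2 * n + 1).factorial * (2 * n + 1 : ℝ) ^ 2))))
     (∫ x in (0:ℝ)..1, Real.sin (a * x) * Real.log x / x) := by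
  have hsinh := Real.hasSum_sinh a
  have h := intervalIntegral.hasSum_integral_of_dominated_convergence (μ := volume) (a := 0) (b := 1)
    (F := fun (n : ℕ) (x : ℝ) => ((-1 : ℝ) ^ n * a ^ (2 * n + 1) / (2 * n + 1).factorial) * (x^(2*n) * Real.log x))
    (f := fun x => Real.sin (a * x) * Real.log x / x)
    (fun n x => (a ^ (2 * n + 1) / (2 * n + 1).factorial) * |Real.log x|)
    (fun n => Measurable.aestronglyMeasurable (by fun_prop))
    (fun n => Eventually.of_forall fun x hx => ?_)
    (Eventually.of_forall fun x hx => hsinh.summable.mul_right _) ?_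
    (Eventually.of_forall fun x hx => ?_)
  · refine h.congr_fun fun n => ?_
    rw [intervalIntegral.integral_const_mul, aux_pow_log]
    push_cast
    field_simp
    ring
  · rw [Set.uIoc_of_le zero_le_one] at hx
    rw [norm_mul, norm_div, norm_mul, norm_pow, norm_neg, norm_one, one_pow, one_mul, norm_mul,
      Real.norm_of_nonneg (by positivity : 0 ≤ a^(2*n+1)), Real.norm_of_nonneg (by positivity : (0:ℝ) ≤ (2*n+1).factorial),
      Real.norm_of_nonneg (by have := hx.1; positivity : 0 ≤ x^(2*n)), Real.norm_eq_abs]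
    gcongr
    exact mul_le_of_le_one_left (abs_nonneg _) (pow_le_one₀ hx.1.le hx.2)
  · simp_rw [tsum_mul_right]
    exact (intervalIntegral.intervalIntegrable_log'.abs).const_mul _
  · rw [Set.uIoc_of_le zero_le_one] at hx
    have hx0 : x ≠ 0 := hx.1.ne'
    have := (Real.hasSum_sin (a*x)).mul_right (Real.log x / x)
    rw [← mul_div_assoc] at this
    refine this.congr_fun fun n => ?_
    rw [mul_pow, pow_succ x]
    field_simp

theorem sin_log_integral_one_infty (a : ℝ) (ha : 0 < a) :
    Tendsto (fun T : ℝ => ∫ x in (1 : ℝ)..T, Real.sin (a * x) * Real.log x / x)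
      atTop
      (nhds (-(Real.pi / 2) * (Real.eulerMascheroniConstant + Real.log a) +
        a * ∑' n : ℕ,
          (-1 : ℝ) ^ n * a ^ (2 * n) / ((2 * n + 1).factorial * (2 * n + 1 : ℝ) ^ 2))) := by
  have hs := (aux_series a ha).tsum_eq
  rw [tsum_neg, tsum_mul_left] at hs
  have h := (aux_limit a ha).sub_const (∫ x in (0:ℝ)..1, Real.sin (a * x) * Real.log x / x)
  rw [← hs, sub_neg_eq_add] at h
  refine h.congr' ?_
  rw [hs]
  have hint : ∀ T : ℝ, 0 < T → IntervalIntegrable (fun x => Real.sin (a * x) * Real.log x / x) volume 0 T := by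
    intro T hT
    have h1 : IntervalIntegrable (fun x => (a * Real.sinc (a * x)) * Real.log x) volume 0 T :=
      intervalIntegral.intervalIntegrable_log'.continuousOn_mul
        (by have := Real.continuous_sinc; fun_prop)
    refine h1.congr fun x hx => ?_
    rw [Set.uIoc_of_le hT.le] at hx
    have hx0 : x ≠ 0 := hx.1.ne'
    rw [Real.sinc_of_ne_zero (mul_ne_zero ha.ne' hx0)]
    field_simp
  filter_upwards [eventually_gt_atTop 0] with T hT
  rw [intervalIntegral.integral_interval_sub_left (hint T hT) (hint 1 one_pos)]
end

section
/- For every real a > 0 and every real μ with 0 < μ < 1, the improper integral lim_{T→∞} ∫₀^T cos(a·x) · x^{μ−1} · ln x dx exists and equals (Γ(μ)/a^μ) · [ (ψ(μ) − ln a) · cos(μπ/2) − (π/2) · sin(μπ/2) ], where Γ is the real Gamma function and ψ(μ) = Γ'(μ)/Γ(μ) is the digamma function. -/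
open MeasureTheory Filter

/-- The kernel `1 - exp (-r x)`. -/
noncomputable def crlK (r : ℂ) (x : ℝ) : ℂ := 1 - Complex.exp (-(r * x))

lemma crlK_cont (r : ℂ) : Continuous (crlK r) := by
  unfold crlK; fun_prop

lemma crlK_norm_le_two {r : ℂ} (hr : 0 ≤ r.re) {x : ℝ} (hx : 0 ≤ x) : ‖crlK r x‖ ≤ 2 := by
  unfold crlK
  refine (norm_sub_le _ _).trans ?_
  have : ‖Complex.exp (-(r * x))‖ ≤ 1 := by
    rw [Complex.norm_exp]
    simp
    positivity
  simp only [norm_one]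
  linarith

lemma crlK_norm_le {r : ℂ} (hr : 0 ≤ r.re) {x : ℝ} (hx : 0 ≤ x) :
    ‖crlK r x‖ ≤ 2 * ‖r‖ * x := by
  have hn : ‖-(r * x)‖ = ‖r‖ * x := by simp [abs_of_nonneg hx]
  by_cases h : ‖-(r * x)‖ ≤ 1
  · have := Complex.norm_exp_sub_one_le h
    unfold crlK
    rw [norm_sub_rev]
    rw [hn] at this
    linarith
  · have := crlK_norm_le_two hr hx
    rw [hn] at h
    push Not at h
    linarith

lemma crlK_bigO_top {r : ℂ} (hr : 0 ≤ r.re) :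
    (crlK r) =O[atTop] fun x : ℝ => x ^ (-(0 : ℝ)) := by
  refine Asymptotics.IsBigO.of_bound 2 ?_
  filter_upwards [eventually_ge_atTop 0] with x hx
  simpa using crlK_norm_le_two hr hx

lemma crlK_bigO_zero {r : ℂ} (hr : 0 ≤ r.re) :
    (crlK r) =O[nhdsWithin 0 (Set.Ioi 0)] fun x : ℝ => x ^ (-(-1 : ℝ)) := by
  refine Asymptotics.IsBigO.of_bound (2 * ‖r‖) ?_
  filter_upwards [self_mem_nhdsWithin] with x hx
  have hx' : (0 : ℝ) < x := hx
  simpa [abs_of_pos hx'] using crlK_norm_le hr hx'.le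

lemma crlK_mellinConv {r : ℂ} (hr : 0 ≤ r.re) {s : ℂ} (h0 : 0 < s.re) (h1 : s.re < 1) :
    MellinConvergent (crlK r) (s - 1) :=
  mellinConvergent_of_isBigO_rpow ((crlK_cont r).locallyIntegrable.locallyIntegrableOn _)
    (crlK_bigO_top hr) (by simpa using h1) (crlK_bigO_zero hr) (by simpa using h0)

lemma crlK_mellinDeriv {r : ℂ} (hr : 0 ≤ r.re) {s : ℂ} (h0 : 0 < s.re) (h1 : s.re < 1) :
    MellinConvergent (fun t => Real.log t • crlK r t) (s - 1) ∧
    HasDerivAt (mellin (crlK r)) (mellin (fun t => Real.log t • crlK r t) (s - 1)) (s - 1) :=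
  mellin_hasDerivAt_of_isBigO_rpow ((crlK_cont r).locallyIntegrable.locallyIntegrableOn _)
    (crlK_bigO_top hr) (by simpa using h1) (crlK_bigO_zero hr) (by simpa using h0)

lemma crl_cpow_contOn (s : ℂ) : ContinuousOn (fun x : ℝ => (x : ℂ) ^ s) (Set.Ioi 0) := by
  intro x hx
  exact (Complex.continuousAt_ofReal_cpow_const x s (Or.inr (ne_of_gt hx))).continuousWithinAt

lemma crl_real_int {σ δ : ℝ} (hσ : 0 < σ) (hδ : 0 < δ) :
    IntegrableOn (fun x : ℝ => x ^ (σ - 1) * Real.exp (-(δ * x))) (Set.Ioi 0) := by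
  have := integrableOn_rpow_mul_exp_neg_mul_rpow (p := 1) (s := σ - 1) (b := δ)
    (by linarith) one_pos hδ
  simpa using this

lemma crl_gint {r : ℂ} (hr : 0 < r.re) {s : ℂ} (h0 : 0 < s.re) :
    IntegrableOn (fun x : ℝ => (x : ℂ) ^ (s - 1) * Complex.exp (-(r * x))) (Set.Ioi 0) := by
  refine Integrable.mono' (crl_real_int h0 hr) ?_ ?_
  · refine ContinuousOn.aestronglyMeasurable ?_ measurableSet_Ioi
    exact (crl_cpow_contOn _).mul (by fun_prop)
  · filter_upwards [ae_restrict_mem measurableSet_Ioi] with x hx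
    rw [norm_mul, Complex.norm_cpow_eq_rpow_re_of_pos hx, Complex.norm_exp]
    simp

lemma crlK_hasDeriv (r : ℂ) (x : ℝ) :
    HasDerivAt (crlK r) (r * Complex.exp (-(r * x))) x := by
  unfold crlK
  have h : HasDerivAt (fun x : ℝ => -(r * (x : ℂ))) (-(r * 1)) x :=
    ((Complex.ofRealCLM.hasDerivAt).const_mul r).neg
  have := (h.cexp).const_sub 1
  convert! this using 1
  ring

/-- `x ^ (s-1) * (1 - exp (-r x))` has the expected derivative. -/
lemma crl_F_deriv (r : ℂ) {s : ℂ} (h1 : s.re < 1) {x : ℝ} (hx : 0 < x) :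
    HasDerivAt (fun x : ℝ => (x : ℂ) ^ (s - 1) * crlK r x)
      ((s - 1) * ((x : ℂ) ^ (s - 1 - 1) * crlK r x) +
        r * ((x : ℂ) ^ (s - 1) * Complex.exp (-(r * x)))) x := by
  have hs : s - 1 ≠ 0 := by
    intro h
    have := congrArg Complex.re h
    simp at this
    linarith
  have := (hasDerivAt_ofReal_cpow_const hx.ne' hs).mul (crlK_hasDeriv r x)
  convert! this using 1
  ring

lemma crl_F_norm_zero {r : ℂ} (hr : 0 ≤ r.re) (s : ℂ) {x : ℝ} (hx : 0 < x) :
    ‖(x : ℂ) ^ (s - 1) * crlK r x‖ ≤ 2 * ‖r‖ * x ^ s.re := by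
  rw [norm_mul, Complex.norm_cpow_eq_rpow_re_of_pos hx]
  calc x ^ (s - 1).re * ‖crlK r x‖ ≤ x ^ (s - 1).re * (2 * ‖r‖ * x) := by
        gcongr; exact crlK_norm_le hr hx.le
    _ = 2 * ‖r‖ * (x ^ (s - 1).re * x ^ (1 : ℝ)) := by rw [Real.rpow_one]; ring
    _ = _ := by rw [← Real.rpow_add hx]; simp

lemma crl_F_norm_top {r : ℂ} (hr : 0 ≤ r.re) (s : ℂ) {x : ℝ} (hx : 0 < x) :
    ‖(x : ℂ) ^ (s - 1) * crlK r x‖ ≤ 2 * x ^ (-(1 - s.re)) := by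
  rw [norm_mul, Complex.norm_cpow_eq_rpow_re_of_pos hx]
  have : -(1 - s.re) = (s - 1).re := by simp
  rw [this, mul_comm]
  gcongr
  exact crlK_norm_le_two hr hx.le

lemma crl_ibp {r : ℂ} (hr : 0 < r.re) {s : ℂ} (h0 : 0 < s.re) (h1 : s.re < 1) :
    r * (∫ x in Set.Ioi (0 : ℝ), (x : ℂ) ^ (s - 1) * Complex.exp (-(r * x))) =
      (1 - s) * mellin (crlK r) (s - 1) := by
  have hc : ContinuousWithinAt (fun x : ℝ => (x : ℂ) ^ (s - 1) * crlK r x) (Set.Ici 0) 0 := by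
    rw [← continuousWithinAt_Ioi_iff_Ici]
    unfold ContinuousWithinAt
    have : crlK r 0 = 0 := by simp [crlK]
    beta_reduce
    rw [this, mul_zero]
    refine squeeze_zero_norm' (a := fun x : ℝ => 2 * ‖r‖ * x ^ s.re) ?_ ?_
    · filter_upwards [self_mem_nhdsWithin] with x hx using crl_F_norm_zero hr.le s hx
    · have : Tendsto (fun x : ℝ => 2 * ‖r‖ * x ^ s.re) (nhds 0) (nhds (2 * ‖r‖ * 0 ^ s.re)) :=
        ((Real.continuousAt_rpow_const 0 s.re (Or.inr h0.le)).tendsto).const_mul _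
      rw [Real.zero_rpow h0.ne', mul_zero] at this
      exact this.mono_left nhdsWithin_le_nhds
  have ht : Tendsto (fun x : ℝ => (x : ℂ) ^ (s - 1) * crlK r x) atTop (nhds 0) := by
    refine squeeze_zero_norm' (a := fun x : ℝ => 2 * x ^ (-(1 - s.re))) ?_ ?_
    · filter_upwards [eventually_gt_atTop 0] with x hx using crl_F_norm_top hr.le s hx
    · simpa using (tendsto_rpow_neg_atTop (y := 1 - s.re) (by linarith)).const_mul 2
  have i1 : IntegrableOn (fun x : ℝ => (x : ℂ) ^ (s - 1 - 1) * crlK r x) (Set.Ioi 0) :=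
    crlK_mellinConv hr.le h0 h1
  have i2 := crl_gint hr h0
  have := integral_Ioi_of_hasDerivAt_of_tendsto hc (fun x hx => crl_F_deriv r h1 hx)
    ((i1.const_mul (s - 1)).add (i2.const_mul r)) ht
  rw [integral_add (i1.const_mul (s - 1)) (i2.const_mul r), integral_const_mul,
    integral_const_mul] at this
  have h0' : crlK r 0 = 0 := by simp [crlK]
  rw [h0'] at this
  simp only [mellin, smul_eq_mul]
  linear_combination this

lemma crl_N_deriv {r : ℂ} (hr : 0 < r.re) {s : ℂ} (h0 : 0 < s.re) (h1 : s.re < 1) :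
    HasDerivAt (fun r => mellin (crlK r) (s - 1))
      (∫ x in Set.Ioi (0 : ℝ), (x : ℂ) ^ (s - 1) * Complex.exp (-(r * x))) r := by
  have hU : {z : ℂ | r.re / 2 < z.re} ∈ nhds r :=
    (isOpen_lt continuous_const Complex.continuous_re).mem_nhds (by simp; linarith)
  have := (hasDerivAt_integral_of_dominated_loc_of_deriv_le (μ := volume.restrict (Set.Ioi (0:ℝ)))
    (F := fun (r : ℂ) (x : ℝ) => (x : ℂ) ^ (s - 1 - 1) • crlK r x)
    (F' := fun (r : ℂ) (x : ℝ) => (x : ℂ) ^ (s - 1) * Complex.exp (-(r * x)))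
    (bound := fun x : ℝ => x ^ (s.re - 1) * Real.exp (-(r.re / 2 * x))) (x₀ := r) hU
    ?_ ?_ ?_ ?_ ?_ ?_).2
  · exact this
  · filter_upwards [hU] with z hz
    have hz' : r.re / 2 < z.re := hz
    exact (crlK_mellinConv (r := z) (by linarith) h0 h1).aestronglyMeasurable
  · exact crlK_mellinConv hr.le h0 h1
  · exact (crl_gint hr h0).aestronglyMeasurable
  · filter_upwards [ae_restrict_mem measurableSet_Ioi] with x hx z hz
    have hx' : (0 : ℝ) < x := hx
    rw [norm_mul, Complex.norm_cpow_eq_rpow_re_of_pos hx, Complex.norm_exp]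
    simp only [Complex.sub_re, Complex.one_re, Complex.neg_re, Complex.mul_re, Complex.ofReal_re,
      Complex.ofReal_im, mul_zero, sub_zero]
    have hz' : r.re / 2 < z.re := hz
    gcongr
  · exact crl_real_int h0 (by linarith)
  · filter_upwards [ae_restrict_mem measurableSet_Ioi] with x hx z hz
    have hx' : (0 : ℝ) < x := hx
    unfold crlK
    have h : HasDerivAt (fun z : ℂ => -(z * (x : ℂ))) (-(1 * (x : ℂ))) z :=
      ((hasDerivAt_id z).mul_const (x : ℂ)).neg
    have := ((h.cexp).const_sub 1).const_mul ((x : ℂ) ^ (s - 1 - 1))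
    simp only [smul_eq_mul]
    convert! this using 1
    rw [Complex.cpow_sub (s - 1) 1 (by exact_mod_cast hx'.ne'), Complex.cpow_one]
    have : (x : ℂ) ≠ 0 := by exact_mod_cast hx'.ne'
    field_simp

lemma crl_N_formula {r : ℂ} (hr : 0 < r.re) {s : ℂ} (h0 : 0 < s.re) (h1 : s.re < 1) :
    (1 - s) * mellin (crlK r) (s - 1) = r ^ (1 - s) * Complex.Gamma s := by
  have hU : IsOpen {z : ℂ | 0 < z.re} := isOpen_lt continuous_const Complex.continuous_re
  have hUc : IsPreconnected {z : ℂ | 0 < z.re} := (convex_halfSpace_re_gt 0).isPreconnected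
  have hd : ∀ z : ℂ, 0 < z.re →
      HasDerivAt (fun z : ℂ => z ^ (s - 1) * mellin (crlK z) (s - 1)) 0 z := by
    intro z hz
    have hz0 : z ≠ 0 := by rintro rfl; simp at hz
    have a1 := ((hasDerivAt_id z).cpow_const (c := s - 1) (Or.inl hz)).mul (crl_N_deriv hz h0 h1)
    convert! a1 using 1
    have := crl_ibp hz h0 h1
    simp only [id]
    rw [Complex.cpow_sub (s - 1) 1 hz0, Complex.cpow_one]
    field_simp
    linear_combination (- z ^ (s - 1)) * this
  have key := hU.is_const_of_deriv_eq_zero hUc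
    (fun z hz => (hd z hz).differentiableAt.differentiableWithinAt)
    (fun z hz => (hd z hz).deriv) (x := r) (y := 1) hr (by simp)
  have k1 := crl_ibp (r := 1) (by simp) h0 h1
  have hG : (∫ x in Set.Ioi (0 : ℝ), (x : ℂ) ^ (s - 1) * Complex.exp (-(1 * x))) =
      Complex.Gamma s := by
    have := Complex.integral_cpow_mul_exp_neg_mul_Ioi h0 one_pos
    simpa using this
  rw [hG] at k1
  simp only [Complex.one_cpow, one_mul] at key k1
  have hr0 : r ≠ 0 := by rintro rfl; simp at hr
  have : r ^ (1 - s) * r ^ (s - 1) = 1 := by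
    rw [← Complex.cpow_add _ _ hr0]; simp
  rw [k1, ← key]
  linear_combination (-(1 - s) * mellin (crlK r) (s - 1)) * this

lemma crl_bound_int {C : ℝ} (hC : 0 ≤ C) {s : ℂ} (h0 : 0 < s.re) (h1 : s.re < 1) :
    IntegrableOn (fun x : ℝ => ‖(x : ℂ) ^ (s - 1 - 1)‖ * min 2 (2 * C * x)) (Set.Ioi 0) := by
  have hc : Continuous (fun x : ℝ => ((min 2 (2 * C * x) : ℝ) : ℂ)) := by fun_prop
  have hn : ∀ x : ℝ, 0 < x → ‖((min 2 (2 * C * x) : ℝ) : ℂ)‖ = min 2 (2 * C * x) := by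
    intro x hx
    rw [Complex.norm_real, Real.norm_of_nonneg]
    positivity
  have : MellinConvergent (fun x : ℝ => ((min 2 (2 * C * x) : ℝ) : ℂ)) (s - 1) := by
    refine mellinConvergent_of_isBigO_rpow (a := 0) (b := -1)
      (hc.locallyIntegrable.locallyIntegrableOn _) ?_ (by simpa using h1) ?_ (by simpa using h0)
    · refine Asymptotics.IsBigO.of_bound 2 ?_
      filter_upwards [eventually_gt_atTop 0] with x hx
      rw [hn x hx]
      simp
    · refine Asymptotics.IsBigO.of_bound (2 * C) ?_
      filter_upwards [self_mem_nhdsWithin] with x hx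
      have hx' : (0 : ℝ) < x := hx
      rw [hn x hx]
      simp [abs_of_pos hx']
  refine (Integrable.norm this).congr ?_
  filter_upwards [ae_restrict_mem measurableSet_Ioi] with x hx
  rw [norm_smul, hn x hx]

lemma crl_N_formula' {r : ℂ} (hr : 0 ≤ r.re) (hrs : r ∈ Complex.slitPlane)
    {s : ℂ} (h0 : 0 < s.re) (h1 : s.re < 1) :
    (1 - s) * mellin (crlK r) (s - 1) = r ^ (1 - s) * Complex.Gamma s := by
  have hadd : Tendsto (fun ε : ℝ => r + (ε : ℂ)) (nhdsWithin 0 (Set.Ioi 0)) (nhds r) := by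
    have : Continuous (fun ε : ℝ => r + (ε : ℂ)) := by fun_prop
    have := this.tendsto 0
    simp only [Complex.ofReal_zero, add_zero] at this
    exact this.mono_left nhdsWithin_le_nhds
  have hle : ∀ᶠ ε : ℝ in nhdsWithin 0 (Set.Ioi 0), ‖r + (ε : ℂ)‖ ≤ ‖r‖ + 1 := by
    have := hadd.norm.eventually (gt_mem_nhds (show ‖r‖ < ‖r‖ + 1 by linarith))
    filter_upwards [this] with ε h using h.le
  have t1 : Tendsto (fun ε : ℝ => mellin (crlK (r + (ε : ℂ))) (s - 1))
      (nhdsWithin 0 (Set.Ioi 0)) (nhds (mellin (crlK r) (s - 1))) := by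
    refine tendsto_integral_filter_of_dominated_convergence _ ?_ ?_
      (crl_bound_int (C := ‖r‖ + 1) (by positivity) h0 h1) ?_
    · filter_upwards [self_mem_nhdsWithin] with ε hε
      have hε' : (0 : ℝ) < ε := hε
      exact (crlK_mellinConv (by simp; linarith) h0 h1).aestronglyMeasurable
    · filter_upwards [self_mem_nhdsWithin, hle] with ε hε hl
      have hε' : (0 : ℝ) < ε := hε
      have hre : 0 ≤ (r + (ε : ℂ)).re := by simp; linarith
      filter_upwards [ae_restrict_mem measurableSet_Ioi] with x hx
      have hx' : (0 : ℝ) < x := hx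
      rw [norm_smul]
      gcongr
      refine le_min (crlK_norm_le_two hre hx'.le) ((crlK_norm_le hre hx'.le).trans ?_)
      gcongr
    · refine ae_of_all _ fun x => ?_
      have : Continuous (fun z : ℂ => (x : ℂ) ^ (s - 1 - 1) • crlK z x) := by
        unfold crlK; fun_prop
      exact (this.tendsto r).comp hadd
  have t2 : Tendsto (fun ε : ℝ => (r + (ε : ℂ)) ^ (1 - s) * Complex.Gamma s)
      (nhdsWithin 0 (Set.Ioi 0)) (nhds (r ^ (1 - s) * Complex.Gamma s)) :=
    ((hadd.cpow tendsto_const_nhds hrs)).mul_const _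
  refine tendsto_nhds_unique (t1.const_mul (1 - s)) (t2.congr' ?_)
  filter_upwards [self_mem_nhdsWithin] with ε hε
  have hε' : (0 : ℝ) < ε := hε
  exact (crl_N_formula (by simp; linarith) h0 h1).symm

lemma crl_deriv_formula {r : ℂ} (hr : 0 ≤ r.re) (hrs : r ∈ Complex.slitPlane)
    {s : ℂ} (h0 : 0 < s.re) (h1 : s.re < 1) :
    mellin (crlK r) (s - 1) + (s - 1) * mellin (fun t => Real.log t • crlK r t) (s - 1) =
      r ^ (1 - s) * (Complex.log r * Complex.Gamma s - deriv Complex.Gamma s) := by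
  have hr0 : r ≠ 0 := Complex.slitPlane_ne_zero hrs
  have hG : DifferentiableAt ℂ Complex.Gamma s := by
    refine Complex.differentiableAt_Gamma s fun m hm => ?_
    have := congrArg Complex.re hm
    simp at this
    have : (0 : ℝ) ≤ m := m.cast_nonneg
    linarith
  have d1 : HasDerivAt (fun z : ℂ => (z - 1) * mellin (crlK r) (z - 1))
      (1 * mellin (crlK r) (s - 1) +
        (s - 1) * mellin (fun t => Real.log t • crlK r t) (s - 1)) s := by
    have e1 : HasDerivAt (fun z : ℂ => z - 1) 1 s := (hasDerivAt_id s).sub_const 1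
    have e2 : HasDerivAt (fun z : ℂ => mellin (crlK r) (z - 1))
        (mellin (fun t => Real.log t • crlK r t) (s - 1)) s :=
      ((crlK_mellinDeriv hr h0 h1).2).comp_sub_const s 1
    exact e1.mul e2
  have d2 : HasDerivAt (fun z : ℂ => -(r ^ (1 - z) * Complex.Gamma z))
      (-((r ^ (1 - s) * Complex.log r * (-1)) * Complex.Gamma s +
        r ^ (1 - s) * deriv Complex.Gamma s)) s := by
    have e1 : HasDerivAt (fun z : ℂ => 1 - z) (-1) s := (hasDerivAt_id s).const_sub 1
    exact ((e1.const_cpow (Or.inl hr0)).mul hG.hasDerivAt).neg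
  have heq : (fun z : ℂ => (z - 1) * mellin (crlK r) (z - 1)) =ᶠ[nhds s]
      (fun z : ℂ => -(r ^ (1 - z) * Complex.Gamma z)) := by
    filter_upwards [(isOpen_lt continuous_const Complex.continuous_re).mem_nhds h0,
      (isOpen_lt Complex.continuous_re continuous_const).mem_nhds h1] with z hz0 hz1
    rw [← crl_N_formula' hr hrs hz0 hz1]
    ring
  have := d1.unique (d2.congr_of_eventuallyEq heq)
  linear_combination this

lemma crl_log_int (r : ℂ) {s : ℂ} (h0 : 0 < s.re) {T : ℝ} (hT : 0 ≤ T) :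
    IntervalIntegrable (fun x : ℝ => (x : ℂ) ^ (s - 1) * Complex.exp (-(r * x)) *
      (Real.log x : ℂ)) volume 0 T := by
  have hexp : Continuous (fun x : ℝ => (Real.exp (-x) : ℂ)) := by fun_prop
  have : MellinConvergent (fun t => Real.log t • (Real.exp (-t) : ℂ)) s := by
    refine (mellin_hasDerivAt_of_isBigO_rpow (a := s.re + 1) (b := 0)
      (hexp.locallyIntegrable.locallyIntegrableOn _) ?_ (by linarith) ?_ h0).1
    · have := (isLittleO_exp_neg_mul_rpow_atTop one_pos (-(s.re + 1))).isBigO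
      refine Asymptotics.IsBigO.trans ?_ this
      refine Asymptotics.IsBigO.of_bound 1 (Eventually.of_forall fun x => ?_)
      rw [Complex.norm_real]
      simp
    · refine Asymptotics.IsBigO.of_bound 1 ?_
      filter_upwards [self_mem_nhdsWithin] with x hx
      have hx' : (0 : ℝ) < x := hx
      rw [Complex.norm_real]
      simp [hx'.le]
  have h2 : IntervalIntegrable
      (fun t : ℝ => (t : ℂ) ^ (s - 1) • (Real.log t • (Real.exp (-t) : ℂ))) volume 0 T := by
    rw [intervalIntegrable_iff_integrableOn_Ioc_of_le hT]
    exact IntegrableOn.mono_set this Set.Ioc_subset_Ioi_self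
  have h3 := h2.mul_continuousOn (g := fun x : ℝ => Complex.exp x * Complex.exp (-(r * x)))
    (by fun_prop)
  refine h3.congr ?_
  refine fun x _ => ?_
  have : Complex.exp (-(x : ℂ)) * Complex.exp x = 1 := by
    rw [← Complex.exp_add]; simp
  simp only [smul_eq_mul, Complex.real_smul, Complex.ofReal_exp, Complex.ofReal_neg]
  linear_combination ((x : ℂ) ^ (s - 1) * (Real.log x : ℂ) * Complex.exp (-(r * x))) * this

lemma crl_limit {r : ℂ} (hr : 0 ≤ r.re) (hrs : r ∈ Complex.slitPlane)
    {s : ℂ} (h0 : 0 < s.re) (h1 : s.re < 1) :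
    Tendsto (fun T : ℝ => ∫ x in (0 : ℝ)..T,
        (x : ℂ) ^ (s - 1) * Complex.exp (-(r * x)) * (Real.log x : ℂ)) atTop
      (nhds (r ^ (-s) * (deriv Complex.Gamma s - Complex.log r * Complex.Gamma s))) := by
  have hr0 : r ≠ 0 := Complex.slitPlane_ne_zero hrs
  set H : ℝ → ℂ := fun x => ((x : ℂ) ^ (s - 1) * crlK r x) * (Real.log x : ℂ) with hH
  have hH0 : H 0 = 0 := by simp [hH]
  have i1 : IntegrableOn (fun x : ℝ => (x : ℂ) ^ (s - 1 - 1) * crlK r x) (Set.Ioi 0) :=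
    crlK_mellinConv hr h0 h1
  have i2 : IntegrableOn (fun x : ℝ => (x : ℂ) ^ (s - 1 - 1) * ((Real.log x : ℂ) * crlK r x))
      (Set.Ioi 0) := by
    have := (crlK_mellinDeriv hr h0 h1).1
    simpa only [MellinConvergent, smul_eq_mul, Complex.real_smul] using this
  set A : ℝ → ℂ := fun x => (x : ℂ) ^ (s - 1 - 1) * crlK r x +
    (s - 1) * ((x : ℂ) ^ (s - 1 - 1) * ((Real.log x : ℂ) * crlK r x)) with hA
  have iA : IntegrableOn A (Set.Ioi 0) := i1.add (i2.const_mul _)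
  have hAint : ∫ x in Set.Ioi 0, A x =
      r ^ (1 - s) * (Complex.log r * Complex.Gamma s - deriv Complex.Gamma s) := by
    rw [← crl_deriv_formula hr hrs h0 h1, hA, integral_add i1 (i2.const_mul _),
      integral_const_mul]
    simp only [mellin, smul_eq_mul, Complex.real_smul]
  have hder : ∀ x : ℝ, 0 < x → HasDerivAt H (A x + r * ((x : ℂ) ^ (s - 1) *
      Complex.exp (-(r * x)) * (Real.log x : ℂ))) x := by
    intro x hx
    have hx0 : (x : ℂ) ≠ 0 := by exact_mod_cast hx.ne'
    have := (crl_F_deriv r h1 hx).mul (Real.hasDerivAt_log hx.ne').ofReal_comp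
    convert! this using 1
    simp only [hA, Complex.ofReal_inv]
    rw [Complex.cpow_sub (s - 1) 1 hx0, Complex.cpow_one]
    field_simp
    ring
  have hc0 : ContinuousWithinAt H (Set.Ici 0) 0 := by
    rw [← continuousWithinAt_Ioi_iff_Ici]
    unfold ContinuousWithinAt
    rw [hH0]
    refine squeeze_zero_norm' (a := fun x : ℝ => 2 * ‖r‖ * |Real.log x * x ^ s.re|) ?_ ?_
    · filter_upwards [self_mem_nhdsWithin] with x hx
      have hx' : (0 : ℝ) < x := hx
      rw [hH, norm_mul, Complex.norm_real, Real.norm_eq_abs, abs_mul,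
        abs_of_nonneg (Real.rpow_nonneg hx'.le _)]
      have := mul_le_mul_of_nonneg_right (crl_F_norm_zero hr s hx) (abs_nonneg (Real.log x))
      linarith
    · simpa using ((tendsto_log_mul_rpow_nhdsGT_zero h0).abs).const_mul (2 * ‖r‖)
  have htop : Tendsto H atTop (nhds 0) := by
    refine squeeze_zero_norm' (a := fun x : ℝ => 2 * |Real.log x / x ^ (1 - s.re)|) ?_ ?_
    · filter_upwards [eventually_gt_atTop 0] with x hx
      rw [hH, norm_mul, Complex.norm_real, Real.norm_eq_abs, abs_div,
        abs_of_nonneg (Real.rpow_nonneg hx.le _)]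
      have := mul_le_mul_of_nonneg_right (crl_F_norm_top hr s hx) (abs_nonneg (Real.log x))
      rw [Real.rpow_neg hx.le] at this
      refine this.trans (le_of_eq ?_)
      rw [div_eq_mul_inv]; ring
    · simpa using ((isLittleO_log_rpow_atTop (r := 1 - s.re)
        (by linarith)).tendsto_div_nhds_zero.abs).const_mul 2
  have hlim : Tendsto (fun T : ℝ => r⁻¹ * (H T - ∫ x in (0 : ℝ)..T, A x)) atTop
      (nhds (r⁻¹ * (0 - ∫ x in Set.Ioi 0, A x))) :=
    (htop.sub (intervalIntegral_tendsto_integral_Ioi 0 iA tendsto_id)).const_mul _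
  have hval : r⁻¹ * (0 - ∫ x in Set.Ioi 0, A x) =
      r ^ (-s) * (deriv Complex.Gamma s - Complex.log r * Complex.Gamma s) := by
    rw [hAint, sub_eq_add_neg 1 s, Complex.cpow_add _ _ hr0, Complex.cpow_one]
    field_simp
    ring
  rw [← hval]
  refine hlim.congr' ?_
  filter_upwards [eventually_ge_atTop 0] with T hT
  have iAT : IntervalIntegrable A volume 0 T := by
    rw [intervalIntegrable_iff_integrableOn_Ioc_of_le hT]
    exact iA.mono_set Set.Ioc_subset_Ioi_self
  have iL := crl_log_int r h0 hT
  have hcont : ContinuousOn H (Set.Icc 0 T) := by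
    intro x hx
    rcases eq_or_lt_of_le hx.1 with h | h
    · rw [← h]
      exact hc0.mono Set.Icc_subset_Ici_self
    · exact (hder x h).continuousAt.continuousWithinAt
  have := intervalIntegral.integral_eq_sub_of_hasDerivAt_of_le hT hcont
    (fun x hx => hder x hx.1) (iAT.add (iL.const_mul r))
  rw [intervalIntegral.integral_add iAT (iL.const_mul r), intervalIntegral.integral_const_mul,
    hH0, sub_zero] at this
  rw [← this]
  field_simp
  ring

/-- For real `a > 0` and `0 < μ < 1`, the improper integral
`∫₀^∞ cos(ax) x^{μ-1} ln x dx` exists as `lim_{T→∞} ∫₀^T` and equals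
`(Γ(μ)/a^μ) [ (ψ(μ) - ln a) cos(μπ/2) - (π/2) sin(μπ/2) ]`,
where `ψ(μ) = Γ'(μ)/Γ(μ)`. -/
theorem cos_rpow_log_integral (a : ℝ) (ha : 0 < a) (μ : ℝ) (hμ0 : 0 < μ) (hμ1 : μ < 1) :
    Tendsto
      (fun T : ℝ => ∫ x in (0 : ℝ)..T, Real.cos (a * x) * x ^ (μ - 1) * Real.log x)
      atTop
      (nhds ((Real.Gamma μ / a ^ μ) *
        ((deriv Real.Gamma μ / Real.Gamma μ - Real.log a) * Real.cos (μ * Real.pi / 2) -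
          (Real.pi / 2) * Real.sin (μ * Real.pi / 2)))) := by
  have hr : 0 ≤ ((a : ℂ) * Complex.I).re := by simp
  have hrs : (a : ℂ) * Complex.I ∈ Complex.slitPlane := by
    rw [Complex.mem_slitPlane_iff]; right; simpa using ha.ne'
  have hlog : Complex.log ((a : ℂ) * Complex.I) =
      (Real.log a : ℂ) + ((Real.pi / 2 : ℝ) : ℂ) * Complex.I := by
    rw [Complex.log_ofReal_mul ha Complex.I_ne_zero, Complex.log_I]
    push_cast; ring
  have hGne : Real.Gamma μ ≠ 0 := (Real.Gamma_pos_of_pos hμ0).ne'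
  have hG : DifferentiableAt ℂ Complex.Gamma (μ : ℂ) := by
    refine Complex.differentiableAt_Gamma _ fun m hm => ?_
    have := congrArg Complex.re hm
    simp at this
    have : (0 : ℝ) ≤ m := m.cast_nonneg
    linarith
  have hGr : DifferentiableAt ℝ Real.Gamma μ := by
    refine Real.differentiableAt_Gamma fun m hm => ?_
    have : (0 : ℝ) ≤ m := m.cast_nonneg
    linarith
  have hGd : deriv Complex.Gamma (μ : ℂ) = ((deriv Real.Gamma μ : ℝ) : ℂ) := by
    have e1 := hG.hasDerivAt.comp_ofReal
    have e2 := hGr.hasDerivAt.ofReal_comp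
    simp only [Complex.Gamma_ofReal] at e1
    exact e1.unique e2
  have hpow : ((a : ℂ) * Complex.I) ^ (-(μ : ℂ)) =
      ((a ^ (-μ) : ℝ) : ℂ) * ((Real.cos (μ * Real.pi / 2) : ℂ) -
        (Real.sin (μ * Real.pi / 2) : ℂ) * Complex.I) := by
    rw [Complex.cpow_def_of_ne_zero (Complex.slitPlane_ne_zero hrs), hlog,
      Real.rpow_def_of_pos ha, add_mul, Complex.exp_add]
    have : ((Real.pi / 2 : ℝ) : ℂ) * Complex.I * -(μ : ℂ) =
        ((-(μ * Real.pi / 2) : ℝ) : ℂ) * Complex.I := by push_cast; ring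
    rw [this, Complex.exp_mul_I, ← Complex.ofReal_cos, ← Complex.ofReal_sin, Real.cos_neg,
      Real.sin_neg]
    push_cast
    ring
  have main := crl_limit hr hrs (s := (μ : ℂ)) (by simpa using hμ0) (by simpa using hμ1)
  have mre := (Complex.continuous_re.tendsto _).comp main
  have hval : (((a : ℂ) * Complex.I) ^ (-(μ : ℂ)) * (deriv Complex.Gamma (μ : ℂ) -
      Complex.log ((a : ℂ) * Complex.I) * Complex.Gamma (μ : ℂ))).re =
      (Real.Gamma μ / a ^ μ) *
        ((deriv Real.Gamma μ / Real.Gamma μ - Real.log a) * Real.cos (μ * Real.pi / 2) -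
          (Real.pi / 2) * Real.sin (μ * Real.pi / 2)) := by
    rw [hpow, hGd, hlog, Complex.Gamma_ofReal, Real.rpow_neg ha.le]
    have hz : ∀ p c d g l q G : ℝ, ((p : ℂ) * ((c : ℂ) - (d : ℂ) * Complex.I) *
        ((g : ℂ) - ((l : ℂ) + (q : ℂ) * Complex.I) * (G : ℂ))).re =
        p * (c * (g - l * G) - d * q * G) := by
      intro p c d g l q G
      simp
      ring
    rw [hz]
    have : a ^ μ ≠ 0 := (Real.rpow_pos_of_pos ha μ).ne'
    field_simp
  rw [hval] at mre
  refine mre.congr' ?_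
  filter_upwards [eventually_ge_atTop 0] with T hT
  have iL := crl_log_int ((a : ℂ) * Complex.I) (s := (μ : ℂ)) (by simpa using hμ0) hT
  have h1 := Complex.reCLM.intervalIntegral_comp_comm iL
  simp only [Complex.reCLM_apply] at h1
  simp only [Function.comp]
  rw [← h1]
  refine intervalIntegral.integral_congr_ae (ae_of_all _ fun x hx => ?_)
  rw [Set.uIoc_of_le hT] at hx
  have e1 : (x : ℂ) ^ ((μ : ℂ) - 1) = ((x ^ (μ - 1) : ℝ) : ℂ) := by
    rw [Complex.ofReal_cpow hx.1.le]; push_cast; rfl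
  have e2 : Complex.exp (-((a : ℂ) * Complex.I * x)) =
      (Real.cos (a * x) : ℂ) - (Real.sin (a * x) : ℂ) * Complex.I := by
    have : -((a : ℂ) * Complex.I * x) = ((-(a * x) : ℝ) : ℂ) * Complex.I := by push_cast; ring
    rw [this, Complex.exp_mul_I, ← Complex.ofReal_cos, ← Complex.ofReal_sin, Real.cos_neg,
      Real.sin_neg]
    push_cast
    ring
  rw [e1, e2]
  have hz : ∀ p c d l : ℝ, ((p : ℂ) * ((c : ℂ) - (d : ℂ) * Complex.I) * (l : ℂ)).re =
      c * p * l := by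
    intro p c d l
    simp [mul_comm]
  exact hz _ _ _ _
end

section
/- For every real a > 0, the function μ ↦ (lim_{T→∞} ∫₀^T cos(a·x) · x^{μ−1} · ln x dx) + 1/μ², defined for 0 < μ < 1, tends to −π²/24 + γ·(γ/2 + ln a) + (ln a)²/2 as μ → 0⁺, where γ is the Euler–Mascheroni constant. -/
open MeasureTheory Filter

open Complex in
lemma laplace_aux {s : ℂ} (hs : 0 < s.re) {r : ℂ} (hr : 0 < r.re) :
    ∫ t : ℝ in Set.Ioi 0, (t : ℂ) ^ (s - 1) * exp (-(r * t)) = r ^ (-s) * Gamma s := by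
  set U : Set ℂ := {z | 0 < z.re}
  have hU : IsOpen U := isOpen_lt continuous_const Complex.continuous_re
  have hint : ∀ (s : ℂ), 0 < s.re → ∀ c : ℝ, 0 < c →
      IntegrableOn (fun t : ℝ => t ^ (s.re - 1) * Real.exp (-c * t)) (Set.Ioi 0) := by
    intro s hs c hc
    have := integrableOn_rpow_mul_exp_neg_mul_rpow (s := s.re - 1) (p := 1) (b := c)
      (by linarith) (by norm_num) hc
    simpa using this
  have hmeas : ∀ (s r : ℂ), AEStronglyMeasurable
      (fun t : ℝ => (t : ℂ) ^ (s - 1) * exp (-(r * t))) (volume.restrict (Set.Ioi 0)) := by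
    intro s r
    refine ContinuousOn.aestronglyMeasurable ?_ measurableSet_Ioi
    refine ContinuousOn.mul ?_ (by fun_prop)
    intro t ht
    exact (Complex.continuousAt_ofReal_cpow_const _ _ (Or.inr (ne_of_gt ht))).continuousWithinAt
  have hnorm : ∀ (s r : ℂ) (t : ℝ), 0 < t → ‖(t : ℂ) ^ (s - 1) * exp (-(r * t))‖ =
      t ^ (s.re - 1) * Real.exp (-r.re * t) := by
    intro s r t ht
    rw [norm_mul, Complex.norm_cpow_eq_rpow_re_of_pos ht, Complex.norm_exp]
    simp
  have hd : DifferentiableOn ℂ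
      (fun r : ℂ => ∫ t : ℝ in Set.Ioi 0, (t : ℂ) ^ (s - 1) * exp (-(r * t))) U := by
    intro r hr
    have hr : 0 < r.re := hr
    have h := hasDerivAt_integral_of_dominated_loc_of_deriv_le
      (μ := volume.restrict (Set.Ioi (0:ℝ)))
      (F := fun (r : ℂ) (t : ℝ) => (t : ℂ) ^ (s - 1) * exp (-(r * t)))
      (F' := fun (r : ℂ) (t : ℝ) => (t : ℂ) ^ (s - 1) * (exp (-(r * t)) * (-(1 * t))))
      (x₀ := r) (s := {z | r.re / 2 < z.re})
      (bound := fun t => t ^ ((s + 1).re - 1) * Real.exp (-(r.re / 2) * t)) ?_ ?_ ?_ ?_ ?_ ?_ ?_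
    · exact h.2.differentiableAt.differentiableWithinAt
    · exact (isOpen_lt continuous_const Complex.continuous_re).mem_nhds (by simpa using hr)
    · exact Eventually.of_forall fun z => hmeas s z
    · refine (integrable_norm_iff (hmeas s r)).1 ?_
      refine (hint s hs r.re hr).congr_fun ?_ measurableSet_Ioi
      intro t ht
      exact (hnorm s r t ht).symm
    · have h2 : AEStronglyMeasurable (fun t : ℝ => (-(1 * t) : ℂ)) (volume.restrict (Set.Ioi 0)) :=
        (by fun_prop : Continuous fun t : ℝ => (-(1 * t) : ℂ)).aestronglyMeasurable
      refine ((hmeas s r).mul h2).congr (Eventually.of_forall fun t => ?_)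
      simp only [Pi.mul_apply]; ring
    · refine (ae_restrict_iff' measurableSet_Ioi).2 (Eventually.of_forall ?_)
      intro t ht z hz
      have ht : 0 < t := ht
      have hz : r.re / 2 < z.re := hz
      have e : (t : ℂ) ^ (s - 1) * (exp (-(z * t)) * (-(1 * t))) =
          -((t : ℂ) ^ (s - 1) * exp (-(z * t)) * t) := by ring
      rw [e, norm_neg, norm_mul, hnorm s z t ht]
      have e2 : t ^ ((s + 1).re - 1) = t ^ (s.re - 1) * t := by
        rw [show (s + 1).re - 1 = (s.re - 1) + 1 by simp, Real.rpow_add ht, Real.rpow_one]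
      rw [e2, Complex.norm_real, Real.norm_of_nonneg ht.le]
      have : Real.exp (-z.re * t) ≤ Real.exp (-(r.re / 2) * t) := by
        apply Real.exp_le_exp.2; nlinarith
      have h0 : 0 ≤ t ^ (s.re - 1) := Real.rpow_nonneg ht.le _
      calc _ = t ^ (s.re - 1) * t * Real.exp (-z.re * t) := by ring
        _ ≤ _ := by gcongr
    · exact hint (s + 1) (by simp; linarith) _ (by linarith)
    · refine Eventually.of_forall ?_
      intro t z hz
      have : HasDerivAt (fun z : ℂ => -(z * t)) (-(1 * t)) z := ((hasDerivAt_id z).mul_const _).neg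
      exact (this.cexp).const_mul _
  have hd2 : DifferentiableOn ℂ (fun r : ℂ => r ^ (-s) * Gamma s) U := by
    intro r hr
    have : r ∈ slitPlane := Or.inl hr
    have := (hasDerivAt_id r).cpow_const (c := -s) this
    exact (this.differentiableAt.mul_const _).differentiableWithinAt
  have hpc : IsPreconnected U := (convex_halfSpace_re_gt 0).isPreconnected
  have key := AnalyticOnNhd.eqOn_of_preconnected_of_frequently_eq
    (hd.analyticOnNhd hU) (hd2.analyticOnNhd hU) hpc (z₀ := 1) (by simp [U]) ?_
  · exact key hr
  have hreal : ∀ x : ℝ, 0 < x → ∫ t : ℝ in Set.Ioi 0, (t : ℂ) ^ (s - 1) * exp (-((x:ℂ) * t)) =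
      (x : ℂ) ^ (-s) * Gamma s := by
    intro x hx
    rw [integral_cpow_mul_exp_neg_mul_Ioi hs hx, one_div, inv_cpow _ _ (by
      rw [arg_ofReal_of_nonneg hx.le]; exact Real.pi_pos.ne), cpow_neg]
  have ht : Tendsto (fun x : ℝ => (x : ℂ)) (nhdsWithin 1 {1}ᶜ) (nhdsWithin (1:ℂ) {1}ᶜ) := by
    refine tendsto_nhdsWithin_iff.2 ⟨?_, ?_⟩
    · exact ((continuous_ofReal.tendsto' (1:ℝ) (1:ℂ) (by simp))).mono_left nhdsWithin_le_nhds
    · filter_upwards [self_mem_nhdsWithin] with x hx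
      simpa using hx
  refine ht.frequently (Eventually.frequently ?_)
  filter_upwards [nhdsWithin_le_nhds (lt_mem_nhds (zero_lt_one' ℝ))] with x hx
  exact hreal x hx


open Complex in
lemma mellin_aux {s : ℂ} (hs : 0 < s.re) {r : ℂ} (hr : 0 < r.re) :
    IntegrableOn (fun t : ℝ => (t : ℂ) ^ (s - 1) * (Real.log t * exp (-(r * t)))) (Set.Ioi 0) ∧
    HasDerivAt (fun s => r ^ (-s) * Gamma s)
      (∫ t : ℝ in Set.Ioi 0, (t : ℂ) ^ (s - 1) * (Real.log t * exp (-(r * t)))) s := by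
  have h := mellin_hasDerivAt_of_isBigO_rpow (f := fun t : ℝ => exp (-(r * t)))
    (s := s) (a := s.re + 1) (b := 0) ?_ ?_ (by linarith) ?_ hs
  · obtain ⟨h1, h2⟩ := h
    refine ⟨by simpa [MellinConvergent] using h1, ?_⟩
    have h3 : HasDerivAt (mellin (fun t : ℝ => exp (-(r * t))))
      (∫ t : ℝ in Set.Ioi 0, (t : ℂ) ^ (s - 1) * (Real.log t * exp (-(r * t)))) s := by
      simpa [mellin] using h2
    refine h3.congr_of_eventuallyEq ?_
    filter_upwards [(isOpen_lt continuous_const Complex.continuous_re).mem_nhds hs] with z hz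
    rw [← laplace_aux hz hr]
    simp [mellin]
  · exact (by fun_prop : Continuous fun t : ℝ => exp (-(r * t))).locallyIntegrable.locallyIntegrableOn _
  · have := (isLittleO_exp_neg_mul_rpow_atTop hr (-(s.re + 1))).isBigO
    refine Asymptotics.IsBigO.trans ?_ this
    refine Asymptotics.isBigO_of_le _ fun t => ?_
    rw [Complex.norm_exp, Real.norm_eq_abs, Real.abs_exp]
    simp
  · simp only [neg_zero, Real.rpow_zero]
    have : Tendsto (fun t : ℝ => exp (-(r * t))) (nhdsWithin 0 (Set.Ioi 0)) (nhds 1) :=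
      ((by fun_prop : Continuous fun t : ℝ => exp (-(r * t))).tendsto' 0 1 (by simp)).mono_left
        nhdsWithin_le_nhds
    exact this.isBigO_one ℝ

lemma abel_aux (f : ℝ → ℝ) (L : ℝ) (hc : ContinuousOn f (Set.Ioi 0))
    (hi : ∀ ε : ℝ, 0 < ε → IntegrableOn (fun x => Real.exp (-(ε * x)) * f x) (Set.Ioi 0))
    (hL : Tendsto (fun T : ℝ => ∫ x in (0:ℝ)..T, f x) atTop (nhds L)) :
    Tendsto (fun ε : ℝ => ∫ x in Set.Ioi 0, Real.exp (-(ε * x)) * f x)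
      (nhdsWithin 0 (Set.Ioi 0)) (nhds L) := by
  have hII : ∀ T : ℝ, 0 ≤ T → IntervalIntegrable f volume 0 T := by
    intro T hT
    have h1 : IntervalIntegrable (fun x => Real.exp (-(1 * x)) * f x) volume 0 T := by
      rw [intervalIntegrable_iff_integrableOn_Ioc_of_le hT]
      exact (hi 1 one_pos).mono_set Set.Ioc_subset_Ioi_self
    have h2 := h1.continuousOn_mul (g := fun x => Real.exp x) Real.continuous_exp.continuousOn
    refine h2.congr fun x _ => ?_
    simp only [one_mul]
    rw [← mul_assoc, ← Real.exp_add]; simp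
  set Φ : ℝ → ℝ := fun T => ∫ x in (0:ℝ)..T, f x with hΦ
  have hΦc0 : ∀ T : ℝ, 0 ≤ T → ContinuousOn Φ (Set.Icc 0 T) := by
    intro T hT
    have := intervalIntegral.continuousOn_primitive_interval (f := f) (μ := volume) (a := 0) (b := T)
      (by rw [Set.uIcc_of_le hT, integrableOn_Icc_iff_integrableOn_Ioc]
          exact (intervalIntegrable_iff_integrableOn_Ioc_of_le hT).1 (hII T hT))
    rwa [Set.uIcc_of_le hT] at this
  have hΦd : ∀ x ∈ Set.Ioi (0:ℝ), HasDerivAt Φ (f x) x := by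
    intro x hx
    exact intervalIntegral.integral_hasDerivAt_right (hII x (le_of_lt hx))
      (hc.stronglyMeasurableAtFilter isOpen_Ioi x hx) (hc.continuousAt (Ioi_mem_nhds hx))
  have hΦc : ContinuousOn Φ (Set.Ioi 0) := fun x hx => (hΦd x hx).continuousAt.continuousWithinAt
  obtain ⟨C, hC⟩ : ∃ C, ∀ x, 0 < x → |Φ x| ≤ C := by
    obtain ⟨T, hT⟩ := eventually_atTop.1 (hL.abs.eventually (ge_mem_nhds (lt_add_one |L|)))
    obtain ⟨C, hC⟩ := isCompact_Icc.exists_bound_of_continuousOn (hΦc0 (max T 0) (le_max_right _ _))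
    refine ⟨max C (|L| + 1), fun x hx => ?_⟩
    rcases le_total x (max T 0) with h | h
    · exact (hC x ⟨hx.le, h⟩).trans (le_max_left _ _)
    · exact (hT x ((le_max_left _ _).trans h)).trans (le_max_right _ _)
  have hmeasg : ∀ ε : ℝ, 0 < ε → AEStronglyMeasurable (fun u => Real.exp (-u) * Φ (u / ε))
      (volume.restrict (Set.Ioi 0)) := by
    intro ε hε
    refine ContinuousOn.aestronglyMeasurable ?_ measurableSet_Ioi
    refine ContinuousOn.mul (by fun_prop) ?_
    exact hΦc.comp (by fun_prop) (fun u hu => div_pos hu hε)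
  have hbd : Integrable (fun u : ℝ => Real.exp (-u) * C) (volume.restrict (Set.Ioi 0)) :=
    (integrableOn_exp_neg_Ioi 0).mul_const C
  have hbound : ∀ ε : ℝ, 0 < ε → ∀ᵐ u ∂(volume.restrict (Set.Ioi (0:ℝ))),
      ‖Real.exp (-u) * Φ (u / ε)‖ ≤ Real.exp (-u) * C := by
    intro ε hε
    refine (ae_restrict_iff' measurableSet_Ioi).2 (Eventually.of_forall fun u hu => ?_)
    rw [norm_mul, Real.norm_eq_abs, Real.abs_exp]
    exact mul_le_mul_of_nonneg_left (hC _ (div_pos hu hε)) (Real.exp_pos _).le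
  have hparts : ∀ ε : ℝ, 0 < ε → ∫ x in Set.Ioi 0, Real.exp (-(ε * x)) * f x =
      ∫ u in Set.Ioi 0, Real.exp (-u) * Φ (u / ε) := by
    intro ε hε
    have hgi : IntegrableOn (fun u => Real.exp (-u) * Φ (u / ε)) (Set.Ioi 0) :=
      hbd.mono' (hmeasg ε hε) (hbound ε hε)
    have hgi2 : IntegrableOn (fun x => Real.exp (-(ε * x)) * Φ x) (Set.Ioi 0) := by
      have := (integrableOn_Ioi_comp_mul_left_iff (fun u => Real.exp (-u) * Φ (u / ε)) 0 hε).2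
        (by simpa using hgi)
      refine this.congr_fun (fun x _ => ?_) measurableSet_Ioi
      simp only
      rw [mul_div_cancel_left₀ _ hε.ne']
    have h1 := integral_comp_mul_left_Ioi (fun u => Real.exp (-u) * Φ (u / ε)) 0 hε
    simp only [mul_zero, mul_div_cancel_left₀ _ hε.ne', smul_eq_mul] at h1
    have hu : ∀ x ∈ Set.Ioi (0:ℝ), HasDerivAt (fun x => Real.exp (-(ε * x)))
        (Real.exp (-(ε * x)) * (-(ε * 1))) x := fun x _ =>
      (((hasDerivAt_id x).const_mul ε).neg).exp
    have hexp : Tendsto (fun x : ℝ => Real.exp (-(ε * x))) atTop (nhds 0) :=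
      Real.tendsto_exp_neg_atTop_nhds_zero.comp (tendsto_id.const_mul_atTop hε)
    have h2 := integral_Ioi_mul_deriv_eq_deriv_mul (a' := 0) (b' := 0) hu hΦd (hi ε hε) ?_ ?_ ?_
    · rw [h2]
      have : ∫ x in Set.Ioi 0, Real.exp (-(ε * x)) * (-(ε * 1)) * Φ x =
          (-ε) * ∫ x in Set.Ioi 0, Real.exp (-(ε * x)) * Φ x := by
        rw [← integral_const_mul]; congr 1; ext x; ring
      rw [this, h1]; field_simp; ring
    · refine (hgi2.const_mul (-ε)).congr (Eventually.of_forall fun x => ?_)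
      simp only [Pi.mul_apply]; ring
    · have h3 : Tendsto Φ (nhdsWithin 0 (Set.Ioi 0)) (nhds 0) := by
        have := (hΦc0 1 zero_le_one) 0 (by simp)
        have h0 : Φ 0 = 0 := by simp [hΦ]
        unfold ContinuousWithinAt at this
        rw [h0] at this
        refine this.mono_left ?_
        rw [← nhdsWithin_Ioo_eq_nhdsGT (zero_lt_one' ℝ)]
        exact nhdsWithin_mono _ Set.Ioo_subset_Icc_self
      have h4 : Tendsto (fun x : ℝ => Real.exp (-(ε * x))) (nhdsWithin 0 (Set.Ioi 0)) (nhds 1) :=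
        ((by fun_prop : Continuous fun x : ℝ => Real.exp (-(ε * x))).tendsto' 0 1
          (by simp)).mono_left nhdsWithin_le_nhds
      simpa using! h4.mul h3
    · simpa using! hexp.mul hL
  have hlim : Tendsto (fun ε : ℝ => ∫ u in Set.Ioi 0, Real.exp (-u) * Φ (u / ε))
      (nhdsWithin 0 (Set.Ioi 0)) (nhds (∫ u in Set.Ioi 0, Real.exp (-u) * L)) := by
    refine tendsto_integral_filter_of_dominated_convergence (fun u => Real.exp (-u) * C) ?_ ?_ hbd ?_
    · filter_upwards [self_mem_nhdsWithin] with ε hε using hmeasg ε hε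
    · filter_upwards [self_mem_nhdsWithin] with ε hε using hbound ε hε
    · refine (ae_restrict_iff' measurableSet_Ioi).2 (Eventually.of_forall fun u hu => ?_)
      refine Tendsto.const_mul _ (hL.comp ?_)
      exact (tendsto_inv_nhdsGT_zero.const_mul_atTop hu : Tendsto (fun ε : ℝ => u * ε⁻¹) _ _)
  rw [integral_mul_const, integral_exp_neg_Ioi_zero, one_mul] at hlim
  refine hlim.congr' ?_
  filter_upwards [self_mem_nhdsWithin] with ε hε using (hparts ε hε).symm

lemma F_aux (a : ℝ) (ha : 0 < a) (μ L : ℝ) (hμ : 0 < μ)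
    (hL : Tendsto (fun T : ℝ => ∫ x in (0 : ℝ)..T, Real.cos (a * x) * x ^ (μ - 1) * Real.log x)
        atTop (nhds L)) :
    HasDerivAt (fun x : ℝ => Real.Gamma x * Real.cos (Real.pi * x / 2) * Real.exp (-(Real.log a * x)))
      L μ := by
  set r : ℝ → ℂ := fun ε => ε - a * Complex.I with hr
  have hrre : ∀ ε, (r ε).re = ε := by intro ε; simp [hr]
  have hμ' : 0 < (μ : ℂ).re := by simpa using hμ
  have hΓd : DifferentiableAt ℂ Complex.Gamma μ := by
    refine Complex.differentiableAt_Gamma _ fun m h => ?_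
    have := congrArg Complex.re h
    simp at this
    have h2 : (0:ℝ) ≤ m := m.cast_nonneg
    linarith
  have hD : ∀ z : ℂ, z ≠ 0 → HasDerivAt (fun s => z ^ (-s) * Complex.Gamma s)
      (z ^ (-(μ:ℂ)) * Complex.log z * (-1) * Complex.Gamma μ +
        z ^ (-(μ:ℂ)) * deriv Complex.Gamma μ) (μ:ℂ) := by
    intro z hz
    exact ((hasDerivAt_neg (μ:ℂ)).const_cpow (Or.inl hz)).mul hΓd.hasDerivAt
  have hpt : ∀ ε x : ℝ, 0 < x →
      ((x : ℂ) ^ ((μ:ℂ) - 1) * (Real.log x * Complex.exp (-(r ε * x)))).re =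
      Real.exp (-(ε * x)) * (Real.cos (a * x) * x ^ (μ - 1) * Real.log x) := by
    intro ε x hx
    have e1 : (x : ℂ) ^ ((μ:ℂ) - 1) = ((x ^ (μ - 1) : ℝ) : ℂ) := by
      rw [Complex.ofReal_cpow hx.le]; simp
    rw [e1, Complex.re_ofReal_mul, Complex.re_ofReal_mul, Complex.exp_re]
    simp [hr]
    ring
  have hi : ∀ ε : ℝ, 0 < ε → IntegrableOn (fun x => Real.exp (-(ε * x)) *
      (Real.cos (a * x) * x ^ (μ - 1) * Real.log x)) (Set.Ioi 0) := by
    intro ε hε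
    have := (mellin_aux hμ' (r := r ε) (by rw [hrre]; exact hε)).1
    refine IntegrableOn.congr_fun (Integrable.re this) (fun x hx => ?_) measurableSet_Ioi
    exact hpt ε x hx
  have hval : ∀ ε : ℝ, 0 < ε → ∫ x in Set.Ioi 0, Real.exp (-(ε * x)) *
      (Real.cos (a * x) * x ^ (μ - 1) * Real.log x) =
      ((r ε) ^ (-(μ:ℂ)) * Complex.log (r ε) * (-1) * Complex.Gamma μ +
        (r ε) ^ (-(μ:ℂ)) * deriv Complex.Gamma μ).re := by
    intro ε hε
    obtain ⟨h1, h2⟩ := mellin_aux hμ' (r := r ε) (by rw [hrre]; exact hε)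
    have hne : r ε ≠ 0 := by
      intro h
      have := hrre ε
      rw [h] at this
      simp at this
      linarith
    rw [← h2.unique (hD _ hne)]
    have := integral_re h1
    simp only [RCLike.re_eq_complex_re] at this
    rw [← this]
    exact setIntegral_congr_fun measurableSet_Ioi fun x hx => (hpt ε x hx).symm
  have hc : ContinuousOn (fun x : ℝ => Real.cos (a * x) * x ^ (μ - 1) * Real.log x) (Set.Ioi 0) := by
    refine ContinuousOn.mul (ContinuousOn.mul (by fun_prop) ?_) ?_
    · exact fun x hx => (Real.continuousAt_rpow_const _ _ (Or.inl (ne_of_gt hx))).continuousWithinAt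
    · exact Real.continuousOn_log.mono fun x hx => ne_of_gt hx
  have hlim := abel_aux _ L hc hi hL
  have hr0 : r 0 = -(a * Complex.I) := by simp [hr]
  have hslit : r 0 ∈ Complex.slitPlane := by
    right; simp [hr]; exact ha.ne'
  have hne0 : r 0 ≠ 0 := Complex.slitPlane_ne_zero hslit
  have hrc : ContinuousAt r 0 := by rw [hr]; fun_prop
  have hlim2 : Tendsto (fun ε => ((r ε) ^ (-(μ:ℂ)) * Complex.log (r ε) * (-1) * Complex.Gamma μ +
        (r ε) ^ (-(μ:ℂ)) * deriv Complex.Gamma μ).re) (nhdsWithin 0 (Set.Ioi 0))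
      (nhds ((r 0) ^ (-(μ:ℂ)) * Complex.log (r 0) * (-1) * Complex.Gamma μ +
        (r 0) ^ (-(μ:ℂ)) * deriv Complex.Gamma μ).re) := by
    have h1 : ContinuousAt (fun ε => (r ε) ^ (-(μ:ℂ))) 0 := hrc.cpow continuousAt_const hslit
    have h2 : ContinuousAt (fun ε => Complex.log (r ε)) 0 := hrc.clog hslit
    have h3 : ContinuousAt (fun ε => ((r ε) ^ (-(μ:ℂ)) * Complex.log (r ε) * (-1) * Complex.Gamma μ +
        (r ε) ^ (-(μ:ℂ)) * deriv Complex.Gamma μ).re) 0 :=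
      Complex.continuous_re.continuousAt.comp ((((h1.mul h2).mul continuousAt_const).mul
        continuousAt_const).add (h1.mul continuousAt_const))
    exact h3.tendsto.mono_left nhdsWithin_le_nhds
  have hLe : L = ((r 0) ^ (-(μ:ℂ)) * Complex.log (r 0) * (-1) * Complex.Gamma μ +
        (r 0) ^ (-(μ:ℂ)) * deriv Complex.Gamma μ).re := by
    refine tendsto_nhds_unique hlim (hlim2.congr' ?_)
    filter_upwards [self_mem_nhdsWithin] with ε hε using (hval ε hε).symm
  rw [hLe]
  have h5 := (hD _ hne0).real_of_complex
  have hlog : Complex.log (r 0) = Real.log a - Real.pi / 2 * Complex.I := by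
    have : r 0 = (a : ℂ) * (-Complex.I) := by rw [hr0]; ring
    rw [this, Complex.log_ofReal_mul ha (by simp), Complex.log_neg_I]
    ring
  refine h5.congr_of_eventuallyEq (Eventually.of_forall fun x => ?_)
  simp only
  rw [Complex.cpow_def_of_ne_zero hne0, hlog, Complex.Gamma_ofReal, Complex.re_mul_ofReal,
    Complex.exp_re]
  simp
  ring_nf

lemma gamma_an {x : ℝ} (hx : 0 < x) : AnalyticAt ℝ Real.Gamma x := by
  have hU : IsOpen {z : ℂ | 0 < z.re} := isOpen_lt continuous_const Complex.continuous_re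
  have hd : DifferentiableOn ℂ Complex.Gamma {z : ℂ | 0 < z.re} := by
    intro z hz
    refine (Complex.differentiableAt_Gamma _ fun m h => ?_).differentiableWithinAt
    have hz : 0 < z.re := hz
    rw [h] at hz
    simp at hz
    have h2 : (0:ℝ) ≤ m := m.cast_nonneg
    linarith
  exact (hd.analyticAt (hU.mem_nhds (by simpa using hx : (x:ℂ) ∈ {z : ℂ | 0 < z.re}))).re_ofReal

lemma gamma_second : deriv (deriv Real.Gamma) 1 =
    Real.eulerMascheroniConstant ^ 2 + Real.pi ^ 2 / 6 := by
  set G1 := deriv Real.Gamma with hG1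
  set G2 := deriv G1 with hG2
  set G3 := deriv G2 with hG3
  have d0 : ∀ x, 0 < x → HasDerivAt Real.Gamma (G1 x) x := fun x hx =>
    (gamma_an hx).differentiableAt.hasDerivAt
  have d1 : ∀ x, 0 < x → HasDerivAt G1 (G2 x) x := fun x hx =>
    (gamma_an hx).deriv.differentiableAt.hasDerivAt
  have d2 : ∀ x, 0 < x → HasDerivAt G2 (G3 x) x := fun x hx =>
    (gamma_an hx).deriv.deriv.differentiableAt.hasDerivAt
  have hp : ∀ (f f' : ℝ → ℝ), (∀ x, 0 < x → HasDerivAt f (f' x) x) → ∀ x ∈ Set.Ioo (-1:ℝ) 1,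
      HasDerivAt (fun x => f (1 + x)) (f' (1 + x)) x := fun f f' h x hx => by
    simpa using (h (1 + x) (by linarith [hx.1])).comp_const_add 1 x
  have hm : ∀ (f f' : ℝ → ℝ), (∀ x, 0 < x → HasDerivAt f (f' x) x) → ∀ x ∈ Set.Ioo (-1:ℝ) 1,
      HasDerivAt (fun x => f (1 - x)) (-f' (1 - x)) x := fun f f' h x hx => by
    simpa using (h (1 - x) (by linarith [hx.2])).comp_const_sub 1 x
  have hs : ∀ x, HasDerivAt (fun x => Real.sin (Real.pi * x)) (Real.cos (Real.pi * x) * (Real.pi * 1)) x :=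
    fun x => ((hasDerivAt_id x).const_mul Real.pi).sin
  have hcs : ∀ x, HasDerivAt (fun x => Real.cos (Real.pi * x)) (-Real.sin (Real.pi * x) * (Real.pi * 1)) x :=
    fun x => ((hasDerivAt_id x).const_mul Real.pi).cos
  set Q : ℝ → ℝ := fun x => Real.Gamma (1 + x) * Real.Gamma (1 - x) with hQ
  set Q1 : ℝ → ℝ := fun x => G1 (1 + x) * Real.Gamma (1 - x) - Real.Gamma (1 + x) * G1 (1 - x) with hQ1
  set Q2 : ℝ → ℝ := fun x => G2 (1 + x) * Real.Gamma (1 - x) - 2 * G1 (1 + x) * G1 (1 - x)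
    + Real.Gamma (1 + x) * G2 (1 - x) with hQ2
  have q0 : ∀ x ∈ Set.Ioo (-1:ℝ) 1, HasDerivAt Q (Q1 x) x := fun x hx => by
    refine ((hp _ _ d0 x hx).mul (hm _ _ d0 x hx)).congr_deriv ?_
    simp only [hQ1]; ring
  have q1 : ∀ x ∈ Set.Ioo (-1:ℝ) 1, HasDerivAt Q1 (Q2 x) x := fun x hx => by
    refine (((hp _ _ d1 x hx).mul (hm _ _ d0 x hx)).sub
      ((hp _ _ d0 x hx).mul (hm _ _ d1 x hx))).congr_deriv ?_
    simp only [hQ2]; ring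
  have z0 : (0:ℝ) ∈ Set.Ioo (-1:ℝ) 1 := by simp
  obtain ⟨c, q2⟩ : ∃ c, HasDerivAt Q2 c 0 :=
    ⟨_, (((hp _ _ d2 0 z0).mul (hm _ _ d0 0 z0)).sub
      (((hp _ _ d1 0 z0).const_mul 2).mul (hm _ _ d1 0 z0))).add
      ((hp _ _ d0 0 z0).mul (hm _ _ d2 0 z0))⟩
  have e0 : ∀ x ∈ Set.Ioo (-1:ℝ) 1, Q x * Real.sin (Real.pi * x) = Real.pi * x := by
    intro x hx
    by_cases h0 : x = 0
    · simp [h0]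
    have hsin : Real.sin (Real.pi * x) ≠ 0 := by
      intro h
      obtain ⟨n, hn⟩ := Real.sin_eq_zero_iff.1 h
      have hnx : (n:ℝ) = x := by
        exact mul_left_cancel₀ Real.pi_ne_zero (by linarith : Real.pi * (n:ℝ) = Real.pi * x)
      rw [← hnx] at hx h0
      have h1 : (-1:ℤ) < n := by exact_mod_cast hx.1
      have h2 : n < (1:ℤ) := by exact_mod_cast hx.2
      exact h0 (by exact_mod_cast (by omega : n = 0))
    simp only [hQ]
    rw [add_comm 1 x, Real.Gamma_add_one h0, mul_assoc x, Real.Gamma_mul_Gamma_one_sub, mul_assoc,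
      div_mul_cancel₀ _ hsin, mul_comm]
  have ev : ∀ x ∈ Set.Ioo (-1:ℝ) 1, Set.Ioo (-1:ℝ) 1 ∈ nhds x := fun x hx => isOpen_Ioo.mem_nhds hx
  have e1 : ∀ x ∈ Set.Ioo (-1:ℝ) 1,
      Q1 x * Real.sin (Real.pi * x) + Q x * (Real.cos (Real.pi * x) * (Real.pi * 1)) = Real.pi * 1 := by
    intro x hx
    refine ((q0 x hx).mul (hs x)).unique ?_
    refine ((hasDerivAt_id x).const_mul Real.pi).congr_of_eventuallyEq ?_
    filter_upwards [ev x hx] with y hy using e0 y hy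
  have e2 : ∀ x ∈ Set.Ioo (-1:ℝ) 1,
      (Q2 x * Real.sin (Real.pi * x) + Q1 x * (Real.cos (Real.pi * x) * (Real.pi * 1))) +
      (Q1 x * (Real.cos (Real.pi * x) * (Real.pi * 1)) +
        Q x * (-Real.sin (Real.pi * x) * (Real.pi * 1) * (Real.pi * 1))) = 0 := by
    intro x hx
    refine (((q1 x hx).mul (hs x)).add ((q0 x hx).mul ((hcs x).mul_const _))).unique ?_
    refine (hasDerivAt_const x (Real.pi * 1)).congr_of_eventuallyEq ?_
    filter_upwards [ev x hx] with y hy using e1 y hy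
  have e3 := (((q2.mul (hs 0)).add ((q1 0 z0).mul ((hcs 0).mul_const (Real.pi * 1)))).add
    (((q1 0 z0).mul ((hcs 0).mul_const (Real.pi * 1))).add
      ((q0 0 z0).mul (((hs 0).neg.mul_const (Real.pi * 1)).mul_const (Real.pi * 1))))).unique
    ((hasDerivAt_const 0 (0:ℝ)).congr_of_eventuallyEq (by
      filter_upwards [ev 0 z0] with y hy using e2 y hy))
  have hg1 : G1 1 = -Real.eulerMascheroniConstant := Real.hasDerivAt_Gamma_one.deriv
  simp [hQ2, hQ, hQ1, hg1] at e3
  have hpi := Real.pi_pos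
  have e4 : Real.pi * (6 * (G2 1 - Real.eulerMascheroniConstant ^ 2) - Real.pi ^ 2) = 0 := by
    linarith
  rcases mul_eq_zero.1 e4 with h | h <;> linarith

lemma final_aux (ℓ : ℝ) (F : ℝ → ℝ)
    (hF : ∀ μ : ℝ, 0 < μ → μ < 1 → HasDerivAt (fun x : ℝ => Real.Gamma x *
      Real.cos (Real.pi * x / 2) * Real.exp (-(ℓ * x))) (F μ) μ) :
    Tendsto (fun μ : ℝ => F μ + 1 / μ ^ 2) (nhdsWithin 0 (Set.Ioi 0))
      (nhds (-Real.pi ^ 2 / 24 +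
        Real.eulerMascheroniConstant * (Real.eulerMascheroniConstant / 2 + ℓ) + ℓ ^ 2 / 2)) := by
  set G1 := deriv Real.Gamma with hG1
  set G2 := deriv G1 with hG2
  have d0 : ∀ x, 0 < x → HasDerivAt Real.Gamma (G1 x) x := fun x hx =>
    (gamma_an hx).differentiableAt.hasDerivAt
  have d1 : ∀ x, 0 < x → HasDerivAt G1 (G2 x) x := fun x hx =>
    (gamma_an hx).deriv.differentiableAt.hasDerivAt
  have c2 : ContinuousAt G2 1 := (gamma_an one_pos).deriv.deriv.continuousAt
  have c1 : ContinuousAt G1 1 := (gamma_an one_pos).deriv.continuousAt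
  have c0 : ContinuousAt Real.Gamma 1 := (gamma_an one_pos).continuousAt
  have hg1 : G1 1 = -Real.eulerMascheroniConstant := Real.hasDerivAt_Gamma_one.deriv
  have hg2 : G2 1 = _ := gamma_second
  have hp : ∀ (f f' : ℝ → ℝ), (∀ x, 0 < x → HasDerivAt f (f' x) x) → ∀ x : ℝ, -1 < x →
      HasDerivAt (fun x => f (1 + x)) (f' (1 + x)) x := fun f f' h x hx => by
    simpa using (h (1 + x) (by linarith)).comp_const_add 1 x
  set c : ℝ → ℝ := fun x => Real.cos (Real.pi * x / 2) with hc
  set s : ℝ → ℝ := fun x => Real.sin (Real.pi * x / 2) with hs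
  set e : ℝ → ℝ := fun x => Real.exp (-(ℓ * x)) with he
  have hlin : ∀ x, HasDerivAt (fun x : ℝ => Real.pi * x / 2) (Real.pi / 2) x := fun x => by
    simpa using ((hasDerivAt_id x).const_mul Real.pi).div_const 2
  have dc : ∀ x, HasDerivAt c (-s x * (Real.pi / 2)) x := fun x => (hlin x).cos
  have ds : ∀ x, HasDerivAt s (c x * (Real.pi / 2)) x := fun x => (hlin x).sin
  have de : ∀ x, HasDerivAt e (e x * (-(ℓ * 1))) x := fun x =>
    (((hasDerivAt_id x).const_mul ℓ).neg).exp
  set K : ℝ → ℝ := fun x => c x * e x with hK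
  set K1 : ℝ → ℝ := fun x => -(Real.pi / 2) * (s x * e x) - ℓ * (c x * e x) with hK1
  set K2 : ℝ → ℝ := fun x => (ℓ ^ 2 - Real.pi ^ 2 / 4) * (c x * e x) + ℓ * Real.pi * (s x * e x)
    with hK2
  have k0 : ∀ x, HasDerivAt K (K1 x) x := fun x => by
    refine ((dc x).mul (de x)).congr_deriv ?_
    simp only [hK1]; ring
  have k1 : ∀ x, HasDerivAt K1 (K2 x) x := fun x => by
    refine ((((ds x).mul (de x)).const_mul (-(Real.pi / 2))).sub
      (((dc x).mul (de x)).const_mul ℓ)).congr_deriv ?_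
    simp only [hK2]; ring
  set H : ℝ → ℝ := fun x => Real.Gamma (1 + x) * K x with hH
  set H1 : ℝ → ℝ := fun x => G1 (1 + x) * K x + Real.Gamma (1 + x) * K1 x with hH1
  set H2 : ℝ → ℝ := fun x => G2 (1 + x) * K x + 2 * (G1 (1 + x) * K1 x) + Real.Gamma (1 + x) * K2 x
    with hH2
  have h0 : ∀ x, -1 < x → HasDerivAt H (H1 x) x := fun x hx => (hp _ _ d0 x hx).mul (k0 x)
  have h1 : ∀ x, -1 < x → HasDerivAt H1 (H2 x) x := fun x hx => by
    refine (((hp _ _ d1 x hx).mul (k0 x)).add ((hp _ _ d0 x hx).mul (k1 x))).congr_deriv ?_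
    simp only [hH2]; ring
  have hH0 : H 0 = 1 := by simp [hH, hK, hc, he]
  have h20 : H2 0 / 2 = -Real.pi ^ 2 / 24 +
        Real.eulerMascheroniConstant * (Real.eulerMascheroniConstant / 2 + ℓ) + ℓ ^ 2 / 2 := by
    simp [hH2, hK, hK1, hK2, hc, hs, he, hg1, hg2]
    ring
  have cc : ContinuousAt H2 0 := by
    have sh : ∀ f : ℝ → ℝ, ContinuousAt f 1 → ContinuousAt (fun x => f (1 + x)) 0 := fun f hf =>
      ContinuousAt.comp (f := fun x : ℝ => 1 + x) (by simpa using hf) (by fun_prop)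
    have k2 : ContinuousAt K2 0 := by
      simp only [hK2, hc, hs, he]; fun_prop
    exact (((sh _ c2).mul (k0 0).continuousAt).add (continuousAt_const.mul ((sh _ c1).mul
      (k1 0).continuousAt))).add ((sh _ c0).mul k2)
  have hFe : ∀ μ, 0 < μ → μ < 1 → F μ + 1 / μ ^ 2 = (μ * H1 μ - H μ + 1) / μ ^ 2 := by
    intro μ hμ hμ1
    have := (hF μ hμ hμ1).unique (((h0 μ (by linarith)).div (hasDerivAt_id μ) hμ.ne').congr_of_eventuallyEq
      (by
        filter_upwards [Ioi_mem_nhds hμ] with y hy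
        have hy : 0 < y := hy
        simp only [hH, hK, hc, he, Pi.div_apply, id]
        rw [add_comm 1 y, Real.Gamma_add_one hy.ne']
        field_simp))
    rw [this]
    simp only [id]
    field_simp
  rw [← h20]
  have evp : ∀ᶠ x : ℝ in nhdsWithin 0 (Set.Ioi 0), 0 < x := self_mem_nhdsWithin
  have ev1 : ∀ᶠ x : ℝ in nhdsWithin 0 (Set.Ioi 0), x < 1 :=
    nhdsWithin_le_nhds (gt_mem_nhds one_pos)
  have key : Tendsto (fun μ => (μ * H1 μ - H μ + 1) / μ ^ 2) (nhdsWithin 0 (Set.Ioi 0))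
      (nhds (H2 0 / 2)) := by
    refine HasDerivAt.lhopital_zero_nhdsGT (f' := fun x => x * H2 x) (g' := fun x => 2 * x) ?_ ?_ ?_ ?_ ?_ ?_
    · filter_upwards [evp] with x hx
      refine ((((hasDerivAt_id x).mul (h1 x (by linarith))).sub (h0 x (by linarith))).add_const
        1).congr_deriv ?_
      simp
    · filter_upwards with x
      simpa using hasDerivAt_pow 2 x
    · filter_upwards [evp] with x hx
      positivity
    · have : ContinuousAt (fun μ => μ * H1 μ - H μ + 1) 0 :=
        ((continuousAt_id.mul (h1 0 (by norm_num)).continuousAt).sub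
          (h0 0 (by norm_num)).continuousAt).add continuousAt_const
      have h := this.tendsto
      simp only [hH0] at h
      norm_num at h
      exact h.mono_left nhdsWithin_le_nhds
    · exact ((by fun_prop : Continuous fun x : ℝ => x ^ 2).tendsto' 0 0 (by simp)).mono_left
        nhdsWithin_le_nhds
    · refine (cc.tendsto.div_const 2).mono_left nhdsWithin_le_nhds |>.congr' ?_
      filter_upwards [evp] with x hx
      field_simp
  refine key.congr' ?_
  filter_upwards [evp, ev1] with x hx hx1 using (hFe x hx hx1).symm


/-- For `a > 0`: if `F μ` denotes the improper integral
`∫₀^∞ cos(ax) x^{μ-1} ln x dx` (for `0 < μ < 1`), then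
`F μ + 1/μ² → -π²/24 + γ(γ/2 + ln a) + (ln a)²/2` as `μ → 0⁺`. -/
theorem cos_log_integral_mu_limit (a : ℝ) (ha : 0 < a) (F : ℝ → ℝ)
    (hF : ∀ μ : ℝ, 0 < μ → μ < 1 →
      Tendsto (fun T : ℝ => ∫ x in (0 : ℝ)..T, Real.cos (a * x) * x ^ (μ - 1) * Real.log x)
        atTop (nhds (F μ))) :
    Tendsto (fun μ : ℝ => F μ + 1 / μ ^ 2) (nhdsWithin 0 (Set.Ioi 0))
      (nhds (-Real.pi ^ 2 / 24 +
        Real.eulerMascheroniConstant * (Real.eulerMascheroniConstant / 2 + Real.log a) +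
        Real.log a ^ 2 / 2)) := by
  exact final_aux (Real.log a) F fun μ h0 h1 => F_aux a ha μ (F μ) h0 (hF μ h0 h1)
end

section
/- For every real a > 0, the improper integral lim_{T→∞} ∫₁^T cos(a·x) · (ln x)/x dx exists and equals −π²/24 + γ·(γ/2 + ln a) + (ln a)²/2 + Σ_{n=1}^∞ (−a²)^n / ((2n)! · (2n)²), where γ is the Euler–Mascheroni constant and the series converges absolutely. -/
open MeasureTheory Filter

lemma contDiffAt_Gamma_one {n : ℕ} : ContDiffAt ℂ n Complex.Gamma 1 := by
  have : DifferentiableOn ℂ Complex.Gamma {s | 0 < s.re} := fun s hs =>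
    (Complex.differentiableAt_Gamma s (fun m h => by
      rw [h] at hs; simp at hs; linarith [(Nat.cast_nonneg m : (0:ℝ) ≤ m)])).differentiableWithinAt
  have ho : IsOpen {s : ℂ | 0 < s.re} := isOpen_lt continuous_const Complex.continuous_re
  exact (this.analyticAt (ho.mem_nhds (by simp))).contDiffAt

lemma iterSin (n : ℕ) (c : ℂ) : iteratedDeriv n (fun s : ℂ => Complex.sin (c * s)) 0 = c ^ n * iteratedDeriv n Complex.sin 0 := by
  rw [iteratedDeriv_comp_const_mul Complex.contDiff_sin]; simp

lemma Gamma_second : iteratedDeriv 2 Complex.Gamma 1 =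
    (Real.eulerMascheroniConstant : ℂ) ^ 2 + (Real.pi : ℂ) ^ 2 / 6 := by
  have e : (fun s : ℂ => (Complex.Gamma (1 + s) * Complex.Gamma (1 - s)) * Complex.sin (Real.pi * s))
      =ᶠ[nhds 0] fun s => (Real.pi : ℂ) * s := by
    have : ∀ᶠ s : ℂ in nhds 0, ‖s‖ < 1 := by
      filter_upwards [Metric.ball_mem_nhds (0:ℂ) one_pos] with s hs using by simpa using hs
    filter_upwards [this] with s hs
    by_cases h0 : s = 0
    · simp [h0]
    have hsin : Complex.sin (Real.pi * s) ≠ 0 := by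
      rw [Complex.sin_ne_zero_iff]
      intro k hk
      have hp : (Real.pi : ℂ) ≠ 0 := by exact_mod_cast Real.pi_ne_zero
      have : s = k := by
        rw [mul_comm] at hk; exact mul_right_cancel₀ hp hk
      rw [this] at hs h0
      have h2 : |(k:ℝ)| < 1 := by simpa using hs
      have h3 : |k| < 1 := by exact_mod_cast h2
      have : k = 0 := by simpa using h3
      simp [this] at h0
    rw [add_comm, Complex.Gamma_add_one s h0, mul_assoc s, Complex.Gamma_mul_Gamma_one_sub, mul_assoc, div_mul_cancel₀ _ hsin, mul_comm]
  have c1 : ∀ n : ℕ, ContDiffAt ℂ n (fun s : ℂ => Complex.Gamma (1 + s)) 0 := fun n =>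
    ContDiffAt.comp (0:ℂ) (g := Complex.Gamma) (by simpa using contDiffAt_Gamma_one) (by fun_prop)
  have c2 : ∀ n : ℕ, ContDiffAt ℂ n (fun s : ℂ => Complex.Gamma (1 - s)) 0 := fun n =>
    ContDiffAt.comp (0:ℂ) (g := Complex.Gamma) (by simpa using contDiffAt_Gamma_one) (by fun_prop)
  have hs : ∀ n : ℕ, ContDiffAt ℂ n (fun s : ℂ => Complex.sin (Real.pi * s)) 0 := fun n => by fun_prop
  have d1 : iteratedDeriv 1 Complex.Gamma 1 = -(Real.eulerMascheroniConstant : ℂ) := by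
    rw [iteratedDeriv_one]; exact Complex.hasDerivAt_Gamma_one.deriv
  have p : ∀ n : ℕ, iteratedDeriv n (fun s : ℂ => Complex.Gamma (1 + s) * Complex.Gamma (1 - s)) 0
     = ∑ i ∈ Finset.range (n + 1), n.choose i * iteratedDeriv i Complex.Gamma 1 *
       ((-1) ^ (n-i) * iteratedDeriv (n - i) Complex.Gamma 1) := by
    intro n
    rw [iteratedDeriv_fun_mul (c1 n) (c2 n)]
    simp [iteratedDeriv_comp_const_add, iteratedDeriv_comp_const_sub]
  have k := e.iteratedDeriv_eq 3
  rw [iteratedDeriv_fun_mul ((c1 3).mul (c2 3)) (hs 3)] at k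
  have r : iteratedDeriv 3 (fun s : ℂ => (Real.pi : ℂ) * s) 0 = 0 := by
    simp [iteratedDeriv_succ]
  have s0 : iteratedDeriv 0 Complex.sin 0 = 0 := by simp
  have s1 : iteratedDeriv 1 Complex.sin 0 = 1 := by simp [iteratedDeriv_one]
  have s2 : iteratedDeriv 2 Complex.sin 0 = 0 := by simp [iteratedDeriv_succ]
  have s3 : iteratedDeriv 3 Complex.sin 0 = -1 := by simp [iteratedDeriv_succ]
  rw [r] at k
  simp only [p, iterSin, Finset.sum_range_succ, Finset.sum_range_zero, s0, s1, s2, s3, Nat.reduceSub, Nat.sub_zero, Nat.sub_self, d1, Nat.choose, iteratedDeriv_zero, Complex.Gamma_one] at k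
  norm_num at k
  have hp : (Real.pi : ℂ) ≠ 0 := by exact_mod_cast Real.pi_ne_zero
  have : (Real.pi : ℂ) * (iteratedDeriv 2 Complex.Gamma 1 * 6 - 6 * (Real.eulerMascheroniConstant : ℂ) ^ 2 - (Real.pi : ℂ) ^ 2) = 0 := by
    linear_combination k
  have := (mul_eq_zero.mp this).resolve_left hp
  linear_combination this / 6


lemma mel_bot (r : ℝ) : (fun t : ℝ => (Real.exp (-r * t) : ℂ)) =O[nhdsWithin 0 (Set.Ioi 0)]
    (fun t : ℝ => t ^ (-(0:ℝ))) := by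
  simp only [neg_zero, Real.rpow_zero]
  have : Tendsto (fun t : ℝ => (Real.exp (-r * t) : ℂ)) (nhdsWithin 0 (Set.Ioi 0)) (nhds ((Real.exp (-r * 0) : ℝ) : ℂ)) := by
    apply Tendsto.mono_left _ nhdsWithin_le_nhds
    exact Continuous.tendsto (by fun_prop) 0
  exact this.isBigO_one ℝ

lemma mel_top (r : ℝ) (hr : 0 < r) (a : ℝ) : (fun t : ℝ => (Real.exp (-r * t) : ℂ)) =O[atTop]
    (fun t : ℝ => t ^ (-a)) := by
  have := (isLittleO_exp_neg_mul_rpow_atTop hr (-a)).isBigO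
  refine Asymptotics.IsBigO.trans (Asymptotics.IsBigO.of_norm_le fun t => ?_) this
  simp [Complex.norm_exp]

lemma mel_A (r : ℝ) (hr : 0 < r) (s : ℂ) (hs : 0 < s.re) :
    HasDerivAt (mellin (fun t : ℝ => (Real.exp (-r * t) : ℂ)))
      (mellin (fun t : ℝ => Real.log t • (Real.exp (-r * t) : ℂ)) s) s := by
  refine (mellin_hasDerivAt_of_isBigO_rpow ?_ (mel_top r hr (s.re + 1)) (by linarith) (mel_bot r) hs).2
  exact (Continuous.locallyIntegrable (by fun_prop)).locallyIntegrableOn _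

lemma mel_B (r : ℝ) (hr : 0 < r) (s : ℂ) (hs : 0 < s.re) :
    MellinConvergent (fun t : ℝ => Real.log t • Real.log t • (Real.exp (-r * t) : ℂ)) s ∧
    HasDerivAt (mellin (fun t : ℝ => Real.log t • (Real.exp (-r * t) : ℂ)))
      (mellin (fun t : ℝ => Real.log t • Real.log t • (Real.exp (-r * t) : ℂ)) s) s := by
  refine (mellin_hasDerivAt_of_isBigO_rpow ?_ (isBigO_rpow_top_log_smul (by linarith : s.re + 1 < s.re + 2) (mel_top r hr (s.re + 2))) (by linarith) (isBigO_rpow_zero_log_smul (half_pos hs) (mel_bot r)) (by linarith))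
  refine ContinuousOn.locallyIntegrableOn ?_ measurableSet_Ioi
  have h1 : ContinuousOn Real.log (Set.Ioi 0) :=
    Real.continuousOn_log.mono (by intro x hx; exact (ne_of_gt hx))
  have h2 : ContinuousOn (fun t : ℝ => (Real.exp (-r * t) : ℂ)) (Set.Ioi 0) :=
    Continuous.continuousOn (by fun_prop)
  exact h1.smul h2

lemma mel_val (r : ℝ) (hr : 0 < r) (s : ℂ) (hs : 0 < s.re) :
    mellin (fun t : ℝ => (Real.exp (-r * t) : ℂ)) s = Complex.Gamma s * Complex.exp (-(Real.log r) * s) := by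
  have := Complex.integral_cpow_mul_exp_neg_mul_Ioi hs hr
  rw [mellin, mul_comm]
  have h2 : (1 / (r : ℂ)) ^ s = Complex.exp (-(Real.log r) * s) := by
    rw [Complex.cpow_def_of_ne_zero (by simp [hr.ne'])]
    congr 2
    rw [one_div, ← Complex.ofReal_inv, ← Complex.ofReal_log (by positivity), Real.log_inv]; simp
  rw [← h2, ← this]
  simp

/-- norm of exponential -/
lemma nexp (z : ℂ) (x : ℝ) : ‖Complex.exp (-z * x)‖ = Real.exp (-z.re * x) := by
  simp [Complex.norm_exp]

lemma int_real (r : ℝ) (hr : 0 < r) (k : ℕ) :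
    IntegrableOn (fun x : ℝ => x ^ k * (Real.exp (-r * x) * Real.log x ^ 2)) (Set.Ioi 0) := by
  have := (mel_B r hr (k + 1) (by simp; positivity)).1
  have := this.norm
  refine IntegrableOn.congr_fun this ?_ measurableSet_Ioi
  intro x hx
  have hx : 0 < x := hx
  simp [Complex.norm_exp, abs_of_pos hx]
  left
  rw [← sq_abs (Real.log x)]; ring

lemma int_cplx (z : ℂ) (hz : 0 < z.re) (k : ℕ) :
    IntegrableOn (fun x : ℝ => (x : ℂ) ^ k * (Complex.exp (-z * x) * (Real.log x : ℂ) ^ 2)) (Set.Ioi 0) := by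
  refine Integrable.mono' (int_real z.re hz k) (by fun_prop) ?_
  refine (ae_restrict_iff' measurableSet_Ioi).mpr (Eventually.of_forall fun x hx => ?_)
  have hx : 0 < x := hx
  rw [norm_mul, norm_mul, nexp]
  simp [abs_of_pos hx]

lemma M_real (r : ℝ) (hr : 0 < r) :
    (r : ℂ) * ∫ x in Set.Ioi (0:ℝ), Complex.exp (-r * x) * (Real.log x : ℂ) ^ 2 =
      (Real.eulerMascheroniConstant : ℂ) ^ 2 + (Real.pi : ℂ) ^ 2 / 6
      + 2 * Real.eulerMascheroniConstant * Complex.log r + Complex.log r ^ 2 := by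
  have ho : IsOpen {s : ℂ | 0 < s.re} := isOpen_lt continuous_const Complex.continuous_re
  have e1 : (∫ x in Set.Ioi (0:ℝ), Complex.exp (-r * x) * (Real.log x : ℂ) ^ 2) =
      iteratedDeriv 2 (mellin (fun t : ℝ => (Real.exp (-r * t) : ℂ))) 1 := by
    rw [iteratedDeriv_succ, iteratedDeriv_one]
    have : deriv (mellin (fun t : ℝ => (Real.exp (-r * t) : ℂ))) =ᶠ[nhds 1]
       (mellin (fun t : ℝ => Real.log t • (Real.exp (-r * t) : ℂ))) := by
      filter_upwards [ho.mem_nhds (by simp : (1:ℂ) ∈ _)] with s hs using (mel_A r hr s hs).deriv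
    rw [this.deriv_eq, (mel_B r hr 1 (by simp)).2.deriv, mellin]
    congr 1; ext x; simp; ring
  have e2 : (mellin (fun t : ℝ => (Real.exp (-r * t) : ℂ))) =ᶠ[nhds 1]
      fun s => Complex.Gamma s * Complex.exp (-(Real.log r) * s) := by
    filter_upwards [ho.mem_nhds (by simp : (1:ℂ) ∈ _)] with s hs using mel_val r hr s hs
  rw [e1, e2.iteratedDeriv_eq 2, iteratedDeriv_fun_mul contDiffAt_Gamma_one (by fun_prop)]
  simp only [iteratedDeriv_cexp_const_mul]
  have d1 : iteratedDeriv 1 Complex.Gamma 1 = -(Real.eulerMascheroniConstant : ℂ) := by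
    rw [iteratedDeriv_one]; exact Complex.hasDerivAt_Gamma_one.deriv
  have d0 : Complex.exp (-(Real.log r) * 1) = (r:ℂ)⁻¹ := by
    rw [mul_one, Complex.exp_neg, ← Complex.ofReal_exp, Real.exp_log hr]
  have hr' : (r:ℂ) ≠ 0 := by exact_mod_cast hr.ne'
  simp only [Finset.sum_range_succ, Finset.sum_range_zero, d0, d1, Gamma_second, iteratedDeriv_zero, Complex.Gamma_one, Nat.choose, ← Complex.ofReal_log hr.le]
  norm_num
  field_simp
  ring

lemma M_diff (z : ℂ) (hz : 0 < z.re) :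
    DifferentiableAt ℂ (fun z : ℂ => ∫ x in Set.Ioi (0:ℝ), Complex.exp (-z * x) * (Real.log x : ℂ) ^ 2) z := by
  have key := hasDerivAt_integral_of_dominated_loc_of_deriv_le (μ := volume.restrict (Set.Ioi (0:ℝ)))
    (F := fun (z : ℂ) (x : ℝ) => Complex.exp (-z * x) * (Real.log x : ℂ) ^ 2)
    (F' := fun (z : ℂ) (x : ℝ) => -(x * (Complex.exp (-z * x) * (Real.log x : ℂ) ^ 2)))
    (x₀ := z) (s := Metric.ball z (z.re / 2))
    (bound := fun x => x ^ 1 * (Real.exp (-(z.re/2) * x) * Real.log x ^ 2))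
    (Metric.ball_mem_nhds z (by positivity)) (Eventually.of_forall fun w => by fun_prop)
    (by have := int_cplx z hz 0; simpa [IntegrableOn] using this) (by fun_prop) ?_ (int_real _ (by positivity) 1) ?_
  · exact key.2.differentiableAt
  · refine (ae_restrict_iff' measurableSet_Ioi).mpr (Eventually.of_forall fun x hx w hw => ?_)
    have hx : 0 < x := hx
    rw [norm_neg, norm_mul, norm_mul, nexp]
    have : |(w - z).re| < z.re / 2 := (Complex.abs_re_le_norm _).trans_lt (by simpa [dist_eq_norm] using hw)
    have := (abs_lt.mp this).1
    simp only [Complex.sub_re] at this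
    simp only [Complex.norm_real, norm_pow, Real.norm_eq_abs, abs_of_pos hx, sq_abs, pow_one]
    gcongr
    linarith
  · refine Eventually.of_forall fun x w hw => ?_
    have : HasDerivAt (fun w : ℂ => Complex.exp (-w * x)) (Complex.exp (-w * x) * (-1 * x)) w :=
      ((hasDerivAt_id w).neg.mul_const (x:ℂ)).cexp
    exact (this.mul_const ((Real.log x : ℂ) ^ 2)).congr_deriv (by ring)

lemma M_val (z : ℂ) (hz : 0 < z.re) :
    z * ∫ x in Set.Ioi (0:ℝ), Complex.exp (-z * x) * (Real.log x : ℂ) ^ 2 =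
      (Real.eulerMascheroniConstant : ℂ) ^ 2 + (Real.pi : ℂ) ^ 2 / 6
      + 2 * Real.eulerMascheroniConstant * Complex.log z + Complex.log z ^ 2 := by
  have ho : IsOpen {s : ℂ | 0 < s.re} := isOpen_lt continuous_const Complex.continuous_re
  have h1 : AnalyticOnNhd ℂ (fun z : ℂ => z * ∫ x in Set.Ioi (0:ℝ), Complex.exp (-z * x) * (Real.log x : ℂ) ^ 2) {s : ℂ | 0 < s.re} := by
    refine DifferentiableOn.analyticOnNhd (fun w hw => ?_) ho
    exact (differentiableAt_id.mul (M_diff w hw)).differentiableWithinAt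
  have h2 : AnalyticOnNhd ℂ (fun z : ℂ => (Real.eulerMascheroniConstant : ℂ) ^ 2 + (Real.pi : ℂ) ^ 2 / 6
      + 2 * Real.eulerMascheroniConstant * Complex.log z + Complex.log z ^ 2) {s : ℂ | 0 < s.re} := by
    refine DifferentiableOn.analyticOnNhd (fun w hw => ?_) ho
    have : DifferentiableAt ℂ Complex.log w := Complex.differentiableAt_log (Or.inl hw)
    exact DifferentiableAt.differentiableWithinAt (by fun_prop)
  have hc : IsPreconnected {s : ℂ | 0 < s.re} := (convex_halfSpace_re_gt 0).isPreconnected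
  refine h1.eqOn_of_preconnected_of_frequently_eq h2 hc (z₀ := 1) (by simp) ?_ hz
  have t : Tendsto (fun r : ℝ => (r : ℂ)) (nhdsWithin 1 (Set.Ioi 1)) (nhdsWithin 1 {1}ᶜ) := by
    refine tendsto_nhdsWithin_iff.mpr ⟨?_, ?_⟩
    · exact Tendsto.mono_left (by simpa using Complex.continuous_ofReal.tendsto 1) nhdsWithin_le_nhds
    · filter_upwards [self_mem_nhdsWithin] with r hr
      have : (r:ℝ) ≠ 1 := ne_of_gt hr
      simpa using this
  refine t.frequently (Eventually.frequently ?_)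
  filter_upwards [self_mem_nhdsWithin] with r hr
  exact M_real r (lt_trans one_pos hr)

lemma log2_int : IntegrableOn (fun x : ℝ => Real.log x ^ 2) (Set.Ioc 0 1) := by
  have h := ((int_real 1 one_pos 0).mono_set (Set.Ioc_subset_Ioi_self : Set.Ioc (0:ℝ) 1 ⊆ _)).const_mul (Real.exp 1)
  refine Integrable.mono' h (by fun_prop) ?_
  refine (ae_restrict_iff' measurableSet_Ioc).mpr (Eventually.of_forall fun x hx => ?_)
  rw [Real.norm_of_nonneg (by positivity), pow_zero, one_mul, ← mul_assoc, ← Real.exp_add]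
  have : 1 ≤ Real.exp (1 + -1 * x) := Real.one_le_exp (by linarith [hx.2])
  nlinarith [sq_nonneg (Real.log x)]

lemma pow_log2_int (n : ℕ) : IntegrableOn (fun x : ℝ => x ^ n * Real.log x ^ 2) (Set.Ioc 0 1) := by
  refine Integrable.mono' log2_int (by fun_prop) ?_
  refine (ae_restrict_iff' measurableSet_Ioc).mpr (Eventually.of_forall fun x hx => ?_)
  have := hx.1
  rw [Real.norm_of_nonneg (by positivity)]
  exact mul_le_of_le_one_left (by positivity) (pow_le_one₀ hx.1.le hx.2)

lemma pow_log2_val (n : ℕ) : ∫ x in Set.Ioc (0:ℝ) 1, x ^ n * Real.log x ^ 2 = 2 / (n + 1 : ℝ) ^ 3 := by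
  rw [← intervalIntegral.integral_of_le zero_le_one]
  have hn : (n + 1 : ℝ) ≠ 0 := by positivity
  let f : ℝ → ℝ := fun x => x ^ n * (x * Real.log x ^ 2 / (n + 1) - 2 * (x * Real.log x) / (n + 1) ^ 2 + 2 * x / (n + 1) ^ 3)
  have hd : ∀ x : ℝ, 0 < x → HasDerivAt f (x ^ n * Real.log x ^ 2) x := by
    intro x hx
    have hl := Real.hasDerivAt_log hx.ne'
    have h := (hasDerivAt_pow (n+1) x).mul ((((hl.pow 2).div_const (n + 1 : ℝ)).sub ((hl.const_mul 2).div_const ((n + 1 : ℝ)^2))).add_const (2 / (n+1 : ℝ) ^ 3))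
    refine (h.congr_deriv ?_).congr_of_eventuallyEq ?_
    · simp; field_simp; ring
    · refine Eventually.of_forall fun y => ?_
      simp [f]; ring
  have hc : Tendsto f (nhdsWithin 0 (Set.Ioi 0)) (nhds 0) := by
    have t1 : Tendsto (fun x : ℝ => x * Real.log x ^ 2) (nhdsWithin 0 (Set.Ioi 0)) (nhds 0) := by
      have := (tendsto_log_mul_rpow_nhdsGT_zero (half_pos one_pos)).pow 2
      rw [zero_pow two_ne_zero] at this
      refine this.congr' ?_
      filter_upwards [self_mem_nhdsWithin] with x hx
      have hx : 0 < x := hx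
      rw [mul_pow, ← Real.sqrt_eq_rpow, Real.sq_sqrt hx.le, mul_comm]
    have t2 : Tendsto (fun x : ℝ => x * Real.log x) (nhdsWithin 0 (Set.Ioi 0)) (nhds 0) := by
      simpa using (Real.continuous_mul_log.tendsto 0).mono_left nhdsWithin_le_nhds
    have t3 : Tendsto (fun x : ℝ => x) (nhdsWithin 0 (Set.Ioi 0)) (nhds 0) :=
      tendsto_id.mono_left nhdsWithin_le_nhds
    have := (t3.pow n).mul (((t1.div_const (n + 1 : ℝ)).sub ((t2.const_mul 2).div_const ((n+1:ℝ)^2))).add ((t3.const_mul 2).div_const ((n+1:ℝ)^3)))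
    simpa using this
  have he : Tendsto f (nhdsWithin 1 (Set.Iio 1)) (nhds (f 1)) :=
    (hd 1 one_pos).continuousAt.tendsto.mono_left nhdsWithin_le_nhds
  rw [intervalIntegral.integral_eq_sub_of_hasDerivAt_of_tendsto zero_lt_one (fun x hx => hd x hx.1) ((intervalIntegrable_iff_integrableOn_Ioc_of_le zero_le_one).mpr (pow_log2_int n)) hc he]
  simp [f]

lemma term_eq (a : ℝ) (n : ℕ) : a / 2 * ((-1) ^ n * a ^ (2 * n + 1) / ((2 * n + 1).factorial : ℝ) * (2 / ((2 * n + 1 : ℕ) + 1 : ℝ) ^ 3)) =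
    - ((-a ^ 2) ^ (n + 1) / ((2 * (n + 1)).factorial * (2 * (n + 1) : ℝ) ^ 2)) := by
  have : (2 * (n + 1)).factorial = (2 * n + 2) * (2 * n + 1).factorial := by
    rw [show 2 * (n + 1) = (2 * n + 1) + 1 by ring, Nat.factorial_succ]
  have hf : ((2 * n + 1).factorial : ℝ) ≠ 0 := by positivity
  have h2 : (2 * (n:ℝ) + 2) ≠ 0 := by positivity
  rw [this, neg_pow (a ^ 2), ← pow_mul]
  push_cast
  rw [show (2 * (n:ℝ) + 1 + 1) = 2 * n + 2 by ring, show 2 * ((n:ℝ) + 1) = 2 * n + 2 by ring]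
  field_simp
  ring

lemma sin_series (a : ℝ) (ha : 0 < a) :
    Summable (fun n : ℕ => |(-a ^ 2) ^ (n + 1) / ((2 * (n + 1)).factorial * (2 * (n + 1) : ℝ) ^ 2)|) ∧
    a / 2 * ∫ x in Set.Ioc (0:ℝ) 1, Real.sin (a * x) * Real.log x ^ 2 =
      - ∑' n : ℕ, (-a ^ 2) ^ (n + 1) / ((2 * (n + 1)).factorial * (2 * (n + 1) : ℝ) ^ 2) := by
  have hsum : Summable (fun n : ℕ => a ^ (2 * n + 1) / ((2 * n + 1).factorial : ℝ)) :=
    (Real.summable_pow_div_factorial a).comp_injective (i := fun n : ℕ => 2 * n + 1) (fun _ _ h => by simpa using h)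
  let F : ℕ → ℝ → ℝ := fun n x => (-1) ^ n * a ^ (2 * n + 1) / ((2 * n + 1).factorial : ℝ) * (x ^ (2 * n + 1) * Real.log x ^ 2)
  have hF : ∀ n, Integrable (F n) (volume.restrict (Set.Ioc 0 1)) := fun n => (pow_log2_int (2*n+1)).const_mul _
  have hv : ∀ n, ∫ x in Set.Ioc (0:ℝ) 1, F n x = (-1) ^ n * a ^ (2 * n + 1) / ((2 * n + 1).factorial : ℝ) * (2 / ((2 * n + 1 : ℕ) + 1 : ℝ) ^ 3) := fun n => by
    simp only [F]
    rw [integral_const_mul, pow_log2_val]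
  have hnv : ∀ n, ∫ x in Set.Ioc (0:ℝ) 1, ‖F n x‖ = a ^ (2 * n + 1) / ((2 * n + 1).factorial : ℝ) * (2 / ((2 * n + 1 : ℕ) + 1 : ℝ) ^ 3) := fun n => by
    rw [← pow_log2_val, ← integral_const_mul]
    refine setIntegral_congr_fun measurableSet_Ioc fun x hx => ?_
    have := hx.1
    simp [F, abs_of_pos ha, abs_of_pos this]
  have hs2 : Summable (fun n => ∫ x in Set.Ioc (0:ℝ) 1, ‖F n x‖) := by
    simp only [hnv]
    refine Summable.of_nonneg_of_le (fun n => by positivity) (fun n => ?_) (hsum.mul_right 2)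
    gcongr
    refine div_le_self (by norm_num) (one_le_pow₀ ?_)
    have : (0:ℝ) ≤ (2 * n + 1 : ℕ) := by positivity
    linarith
  have key := hasSum_integral_of_summable_integral_norm hF hs2
  have e : (∫ x in Set.Ioc (0:ℝ) 1, ∑' n, F n x) = ∫ x in Set.Ioc (0:ℝ) 1, Real.sin (a * x) * Real.log x ^ 2 := by
    refine setIntegral_congr_fun measurableSet_Ioc fun x hx => ?_
    have := (Real.hasSum_sin (a * x)).mul_right (Real.log x ^ 2)
    change ∑' n, F n x = Real.sin (a * x) * Real.log x ^ 2
    rw [← this.tsum_eq]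
    congr 1; ext n; simp only [F]; ring
  rw [e] at key
  simp only [hv] at key
  have key2 := key.mul_left (a / 2)
  simp only [term_eq] at key2
  constructor
  · exact (by simpa using key2.summable.neg : Summable fun n : ℕ => (-a ^ 2) ^ (n + 1) / ((2 * (n + 1)).factorial * (2 * (n + 1) : ℝ) ^ 2)).abs
  · rw [← key2.tsum_eq, tsum_neg]

lemma g_int : IntegrableOn (fun x : ℝ => (1 - Real.log x) / x ^ 2) (Set.Ioi 1) := by
  have h := (integrableOn_Ioi_rpow_of_lt (by norm_num : (-(3/2) : ℝ) < -1) one_pos).const_mul 3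
  refine Integrable.mono' h (Measurable.aestronglyMeasurable (by fun_prop)) ?_
  refine (ae_restrict_iff' measurableSet_Ioi).mpr (Eventually.of_forall fun x hx => ?_)
  have hx : 1 < x := hx
  have h0 : 0 < x := by linarith
  have hl := Real.log_nonneg hx.le
  have hl2 := Real.log_le_rpow_div h0.le (half_pos one_pos)
  have h1 : 1 ≤ x ^ (1/2 : ℝ) := Real.one_le_rpow hx.le (by norm_num)
  have : |1 - Real.log x| ≤ 3 * x ^ (1/2 : ℝ) := by
    rw [abs_le]; constructor <;> linarith
  rw [norm_div, Real.norm_eq_abs, Real.norm_of_nonneg (by positivity), div_le_iff₀ (by positivity)]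
  rw [mul_assoc, ← Real.rpow_natCast x 2, ← Real.rpow_add h0]
  norm_num at this ⊢
  exact this

lemma gc_int (z : ℂ) (hz : 0 ≤ z.re) : IntegrableOn (fun x : ℝ => Complex.exp (-z * x) * ((1 - Real.log x) / x ^ 2 : ℝ)) (Set.Ioi 1) := by
  refine Integrable.mono' g_int.norm (by fun_prop) ?_
  refine (ae_restrict_iff' measurableSet_Ioi).mpr (Eventually.of_forall fun x hx => ?_)
  have hx : 1 < x := hx
  rw [norm_mul, nexp, Complex.norm_real]
  exact mul_le_of_le_one_left (norm_nonneg _) (Real.exp_le_one_iff.mpr (by nlinarith))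

lemma hasDerivAt_cexp' (z : ℂ) (x : ℝ) : HasDerivAt (fun x : ℝ => Complex.exp (-z * x)) (-z * Complex.exp (-z * x)) x := by
  have := ((Complex.ofRealCLM.hasDerivAt (x := x)).const_mul (-z)).cexp
  refine this.congr_deriv ?_
  simp; ring

lemma hasDerivAt_logdiv (x : ℝ) (hx : 0 < x) : HasDerivAt (fun x : ℝ => ((Real.log x / x : ℝ) : ℂ)) (((1 - Real.log x) / x ^ 2 : ℝ)) x := by
  have := ((Real.hasDerivAt_log hx.ne').div (hasDerivAt_id x) hx.ne').ofReal_comp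
  refine this.congr_deriv ?_
  rw [id, inv_mul_cancel₀ hx.ne', mul_one]

lemma tendsto_logdiv : Tendsto (fun x : ℝ => Real.log x / x) atTop (nhds 0) :=
  Real.isLittleO_log_id_atTop.tendsto_div_nhds_zero

lemma ibp (z : ℂ) (hz : 0 < z.re) :
    z ^ 2 / 2 * (∫ x in Set.Ioi (1:ℝ), Complex.exp (-z * x) * (Real.log x : ℂ) ^ 2) =
      ∫ x in Set.Ioi (1:ℝ), Complex.exp (-z * x) * ((1 - Real.log x) / x ^ 2 : ℝ) := by
  let f : ℝ → ℂ := fun x => Complex.exp (-z * x) * (z / 2 * (Real.log x : ℂ) ^ 2 + ((Real.log x / x : ℝ) : ℂ))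
  have hi1 : IntegrableOn (fun x : ℝ => Complex.exp (-z * x) * (Real.log x : ℂ) ^ 2) (Set.Ioi 1) := by
    have := (int_cplx z hz 0).mono_set (Set.Ioi_subset_Ioi zero_le_one)
    simpa using this
  have hi2 := gc_int z hz.le
  have hd : ∀ x ∈ Set.Ici (1:ℝ), HasDerivAt f (Complex.exp (-z * x) * ((1 - Real.log x) / x ^ 2 : ℝ) - z ^ 2 / 2 * (Complex.exp (-z * x) * (Real.log x : ℂ) ^ 2)) x := by
    intro x hx
    have hx0 : 0 < x := lt_of_lt_of_le one_pos hx
    have h := (hasDerivAt_cexp' z x).mul (((((Real.hasDerivAt_log hx0.ne').ofReal_comp).pow 2).const_mul (z/2)).add (hasDerivAt_logdiv x hx0))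
    refine h.congr_deriv ?_
    simp
    ring
  have ht : Tendsto f atTop (nhds 0) := by
    have t1 : Tendsto (fun x : ℝ => Complex.exp (-z * x) * (x : ℂ)) atTop (nhds 0) := by
      rw [tendsto_zero_iff_norm_tendsto_zero]
      have := (isLittleO_exp_neg_mul_rpow_atTop hz (-1)).tendsto_div_nhds_zero
      refine this.congr' ?_
      filter_upwards [eventually_gt_atTop 0] with x hx
      rw [norm_mul, nexp, Complex.norm_real, Real.norm_of_nonneg hx.le, Real.rpow_neg_one, div_inv_eq_mul]
    have t2 : Tendsto (fun x : ℝ => ((Real.log x ^ 2 / x : ℝ) : ℂ)) atTop (nhds 0) := by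
      have : Tendsto (fun x : ℝ => Real.log x ^ 2 / x) atTop (nhds 0) :=
        Real.isLittleO_pow_log_id_atTop.tendsto_div_nhds_zero
      exact_mod_cast (Complex.continuous_ofReal.tendsto 0).comp this
    have t3 : Tendsto (fun x : ℝ => ((Real.log x / x * x⁻¹ : ℝ) : ℂ)) atTop (nhds 0) := by
      have : Tendsto (fun x : ℝ => Real.log x / x * x⁻¹) atTop (nhds 0) := by
        simpa using tendsto_logdiv.mul tendsto_inv_atTop_zero
      exact_mod_cast (Complex.continuous_ofReal.tendsto 0).comp this
    have t4 := t1.mul ((t2.const_mul (z / 2)).add t3)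
    simp only [mul_zero, add_zero] at t4
    refine t4.congr' ?_
    filter_upwards [eventually_gt_atTop 0] with x hx
    have hx' : (x : ℂ) ≠ 0 := by exact_mod_cast hx.ne'
    simp only [f]
    push_cast
    field_simp
  have := integral_Ioi_of_hasDerivAt_of_tendsto' hd (hi2.sub (hi1.const_mul _)) ht
  rw [integral_sub hi2 (hi1.const_mul _), integral_const_mul] at this
  simp [f] at this ⊢
  linear_combination -this

lemma W_val (z : ℂ) (hz : 0 < z.re) :
    (∫ x in Set.Ioi (1:ℝ), Complex.exp (-z * x) * ((1 - Real.log x) / x ^ 2 : ℝ)) =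
     z / 2 * ((Real.eulerMascheroniConstant : ℂ) ^ 2 + (Real.pi : ℂ) ^ 2 / 6
      + 2 * Real.eulerMascheroniConstant * Complex.log z + Complex.log z ^ 2) -
     z ^ 2 / 2 * ∫ x in Set.Ioc (0:ℝ) 1, Complex.exp (-z * x) * (Real.log x : ℂ) ^ 2 := by
  have hi : IntegrableOn (fun x : ℝ => Complex.exp (-z * x) * (Real.log x : ℂ) ^ 2) (Set.Ioi 0) := by
    have := (int_cplx z hz 0)
    simpa using this
  rw [← ibp z hz, ← M_val z hz, ← Set.Ioc_union_Ioi_eq_Ioi zero_le_one, setIntegral_union (Set.Ioc_disjoint_Ioi le_rfl) measurableSet_Ioi (hi.mono_set Set.Ioc_subset_Ioi_self) (hi.mono_set (Set.Ioi_subset_Ioi zero_le_one))]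
  ring

lemma W_lim (z : ℂ) (hz : z.re = 0) (hz2 : z ≠ 0) :
    (∫ x in Set.Ioi (1:ℝ), Complex.exp (-z * x) * ((1 - Real.log x) / x ^ 2 : ℝ)) =
     z / 2 * ((Real.eulerMascheroniConstant : ℂ) ^ 2 + (Real.pi : ℂ) ^ 2 / 6
      + 2 * Real.eulerMascheroniConstant * Complex.log z + Complex.log z ^ 2) -
     z ^ 2 / 2 * ∫ x in Set.Ioc (0:ℝ) 1, Complex.exp (-z * x) * (Real.log x : ℂ) ^ 2 := by
  have hne : (nhdsWithin z {s : ℂ | 0 < s.re}).NeBot := by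
    rw [← mem_closure_iff_nhdsWithin_neBot, Complex.closure_setOfPred_lt_re]
    simp [hz]
  have c1 : ContinuousWithinAt (fun z : ℂ => ∫ x in Set.Ioi (1:ℝ), Complex.exp (-z * x) * ((1 - Real.log x) / x ^ 2 : ℝ)) {s : ℂ | 0 < s.re} z := by
    refine continuousWithinAt_of_dominated (bound := fun x => ‖(1 - Real.log x) / x ^ 2‖) (Eventually.of_forall fun w => by fun_prop) ?_ g_int.norm (Eventually.of_forall fun x => Continuous.continuousWithinAt (by fun_prop))
    filter_upwards [self_mem_nhdsWithin] with w hw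
    refine (ae_restrict_iff' measurableSet_Ioi).mpr (Eventually.of_forall fun x hx => ?_)
    have hx : 1 < x := hx
    have hw : 0 < w.re := hw
    rw [norm_mul, nexp, Complex.norm_real]
    exact mul_le_of_le_one_left (norm_nonneg _) (Real.exp_le_one_iff.mpr (by nlinarith))
  have c2 : ContinuousWithinAt (fun z : ℂ => ∫ x in Set.Ioc (0:ℝ) 1, Complex.exp (-z * x) * (Real.log x : ℂ) ^ 2) {s : ℂ | 0 < s.re} z := by
    refine continuousWithinAt_of_dominated (bound := fun x => Real.log x ^ 2) (Eventually.of_forall fun w => by fun_prop) ?_ log2_int (Eventually.of_forall fun x => Continuous.continuousWithinAt (by fun_prop))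
    filter_upwards [self_mem_nhdsWithin] with w hw
    refine (ae_restrict_iff' measurableSet_Ioc).mpr (Eventually.of_forall fun x hx => ?_)
    have hx : 0 < x := hx.1
    have hw : 0 < w.re := hw
    rw [norm_mul, nexp, norm_pow, Complex.norm_real, Real.norm_eq_abs, sq_abs]
    exact mul_le_of_le_one_left (by positivity) (Real.exp_le_one_iff.mpr (by nlinarith))
  have c3 : ContinuousWithinAt Complex.log {s : ℂ | 0 < s.re} z := by
    refine (continuousAt_clog (Or.inr fun h => hz2 (Complex.ext hz h))).continuousWithinAt
  have c4 : ContinuousWithinAt (fun z : ℂ => z) {s : ℂ | 0 < s.re} z := continuousWithinAt_id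
  have c5 : ContinuousWithinAt (fun z : ℂ => z / 2 * ((Real.eulerMascheroniConstant : ℂ) ^ 2 + (Real.pi : ℂ) ^ 2 / 6
      + 2 * Real.eulerMascheroniConstant * Complex.log z + Complex.log z ^ 2) -
     z ^ 2 / 2 * ∫ x in Set.Ioc (0:ℝ) 1, Complex.exp (-z * x) * (Real.log x : ℂ) ^ 2) {s : ℂ | 0 < s.re} z :=
    ((c4.div_const 2).mul ((continuousWithinAt_const.add (continuousWithinAt_const.mul c3)).add (c3.pow 2))).sub (((c4.pow 2).div_const 2).mul c2)
  refine tendsto_nhds_unique (c1.tendsto.congr' ?_) c5.tendsto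
  filter_upwards [self_mem_nhdsWithin] with w hw using W_val w hw

lemma fin_lim (z : ℂ) (hz : z.re = 0) (hz2 : z ≠ 0) :
    Tendsto (fun T : ℝ => ∫ x in (1:ℝ)..T, Complex.exp (-z * x) * ((Real.log x / x : ℝ) : ℂ)) atTop
    (nhds ((∫ x in Set.Ioi (1:ℝ), Complex.exp (-z * x) * ((1 - Real.log x) / x ^ 2 : ℝ)) / z)) := by
  have t1 := intervalIntegral_tendsto_integral_Ioi 1 (gc_int z hz.ge) tendsto_id
  have t2 : Tendsto (fun x : ℝ => Complex.exp (-z * x) * ((Real.log x / x : ℝ) : ℂ)) atTop (nhds 0) := by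
    rw [tendsto_zero_iff_norm_tendsto_zero]
    have := tendsto_logdiv.norm
    rw [norm_zero] at this
    refine this.congr fun x => ?_
    rw [norm_mul, nexp, Complex.norm_real, hz]; simp
  have t3 := (t1.sub t2).div_const z
  rw [sub_zero] at t3
  refine t3.congr' ?_
  filter_upwards [eventually_ge_atTop 1] with T hT
  have sub : ∀ x ∈ Set.uIcc 1 T, 0 < x := fun x hx => by
    rw [Set.uIcc_of_le hT] at hx; linarith [hx.1]
  have cl : ContinuousOn Real.log (Set.uIcc 1 T) := Real.continuousOn_log.mono fun x hx => (sub x hx).ne'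
  have ce : ContinuousOn (fun x : ℝ => Complex.exp (-z * x)) (Set.uIcc 1 T) := Continuous.continuousOn (by fun_prop)
  have i1 : IntervalIntegrable (fun x : ℝ => Complex.exp (-z * x) * ((Real.log x / x : ℝ) : ℂ)) volume 1 T :=
    (ce.mul (Complex.continuous_ofReal.comp_continuousOn (cl.div continuousOn_id fun x hx => (sub x hx).ne'))).intervalIntegrable
  have i2 : IntervalIntegrable (fun x : ℝ => Complex.exp (-z * x) * ((1 - Real.log x) / x ^ 2 : ℝ)) volume 1 T :=
    (ce.mul (Complex.continuous_ofReal.comp_continuousOn ((continuousOn_const.sub cl).div (continuousOn_id.pow 2) fun x hx => pow_ne_zero 2 (sub x hx).ne'))).intervalIntegrable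
  have := intervalIntegral.integral_eq_sub_of_hasDerivAt (a := 1) (b := T)
    (f := fun x : ℝ => Complex.exp (-z * x) * ((Real.log x / x : ℝ) : ℂ))
    (f' := fun x : ℝ => Complex.exp (-z * x) * ((1 - Real.log x) / x ^ 2 : ℝ) - z * (Complex.exp (-z * x) * ((Real.log x / x : ℝ) : ℂ)))
    (fun x hx => ((hasDerivAt_cexp' z x).mul (hasDerivAt_logdiv x (sub x hx))).congr_deriv (by ring)) (i2.sub (i1.const_mul z))
  rw [intervalIntegral.integral_sub i2 (i1.const_mul z), intervalIntegral.integral_const_mul] at this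
  rw [div_eq_iff hz2]
  simp only [Real.log_one, zero_div, Complex.ofReal_zero, mul_zero, sub_zero, id] at this ⊢
  linear_combination this

theorem cos_log_integral_one_infty (a : ℝ) (ha : 0 < a) :
    Summable (fun n : ℕ =>
      |(-a ^ 2) ^ (n + 1) / ((2 * (n + 1)).factorial * (2 * (n + 1) : ℝ) ^ 2)|) ∧
    Tendsto (fun T : ℝ => ∫ x in (1 : ℝ)..T, Real.cos (a * x) * Real.log x / x)
      atTop
      (nhds (-Real.pi ^ 2 / 24 +
        Real.eulerMascheroniConstant * (Real.eulerMascheroniConstant / 2 + Real.log a) +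
        Real.log a ^ 2 / 2 +
        ∑' n : ℕ, (-a ^ 2) ^ (n + 1) / ((2 * (n + 1)).factorial * (2 * (n + 1) : ℝ) ^ 2))) := by
  obtain ⟨hs, hsin⟩ := sin_series a ha
  refine ⟨hs, ?_⟩
  have hz1 : ((a : ℂ) * Complex.I).re = 0 := by simp
  have hz2 : ((a : ℂ) * Complex.I) ≠ 0 := by simp [ha.ne']
  have hlog : Complex.log (a * Complex.I) = (Real.log a : ℂ) + (Real.pi / 2 : ℝ) * Complex.I := by
    rw [Complex.log_ofReal_mul ha Complex.I_ne_zero, Complex.log_I]; push_cast; rfl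
  have t := (Complex.continuous_re.tendsto _).comp (fin_lim _ hz1 hz2)
  rw [W_lim _ hz1 hz2, hlog] at t
  have hint : IntegrableOn (fun x : ℝ => Complex.exp (-(a * Complex.I) * x) * (Real.log x : ℂ) ^ 2) (Set.Ioc 0 1) := by
    refine Integrable.mono' log2_int (by fun_prop) (Eventually.of_forall fun x => ?_)
    rw [norm_mul, nexp, norm_pow, Complex.norm_real, Real.norm_eq_abs, sq_abs]
    simp
  have him : (∫ x in Set.Ioc (0:ℝ) 1, Complex.exp (-(a * Complex.I) * x) * (Real.log x : ℂ) ^ 2).im = - ∫ x in Set.Ioc (0:ℝ) 1, Real.sin (a * x) * Real.log x ^ 2 := by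
    have := Complex.imCLM.integral_comp_comm hint
    rw [← integral_neg]
    refine Eq.trans this.symm ?_
    congr 1; ext x
    rw [← Complex.ofReal_pow, Complex.imCLM_apply, Complex.im_mul_ofReal]
    simp [Complex.exp_im]
  convert t.congr' ?_ using 2
  · set V := ∫ x in Set.Ioc (0:ℝ) 1, Complex.exp (-(a * Complex.I) * x) * (Real.log x : ℂ) ^ 2
    have hV : a / 2 * V.im = ∑' n : ℕ, (-a ^ 2) ^ (n + 1) / ((2 * (n + 1)).factorial * (2 * (n + 1) : ℝ) ^ 2) := by
      rw [him]; linarith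
    rw [← hV]
    have hI : Complex.I ^ 2 = -1 := Complex.I_sq
    have e : ∀ G : ℂ, ((a * Complex.I / 2 * G - (a * Complex.I) ^ 2 / 2 * V) / (a * Complex.I)) =
        ((1 / 2 : ℝ) : ℂ) * G - ((a / 2 : ℝ) : ℂ) * (Complex.I * V) := by
      intro G
      rw [div_eq_iff hz2]
      push_cast
      ring
    have e2 : ((Real.eulerMascheroniConstant : ℂ) ^ 2 + (Real.pi : ℂ) ^ 2 / 6 + 2 * (Real.eulerMascheroniConstant : ℂ) * ((Real.log a : ℂ) + ((Real.pi / 2 : ℝ) : ℂ) * Complex.I) + ((Real.log a : ℂ) + ((Real.pi / 2 : ℝ) : ℂ) * Complex.I) ^ 2)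
        = ((Real.eulerMascheroniConstant ^ 2 + Real.pi ^ 2 / 6 + 2 * Real.eulerMascheroniConstant * Real.log a + Real.log a ^ 2 - Real.pi ^ 2 / 4 : ℝ) : ℂ) + ((Real.eulerMascheroniConstant * Real.pi + Real.log a * Real.pi : ℝ) : ℂ) * Complex.I := by
      push_cast
      linear_combination ((Real.pi : ℂ) / 2) ^ 2 * hI
    rw [e, e2, Complex.sub_re, Complex.re_ofReal_mul, Complex.re_ofReal_mul, Complex.add_re, Complex.ofReal_re, Complex.re_ofReal_mul, Complex.I_re, Complex.I_mul_re]
    ring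
  · filter_upwards [eventually_ge_atTop 1] with T hT
    have sub : ∀ x ∈ Set.uIcc 1 T, 0 < x := fun x hx => by
      rw [Set.uIcc_of_le hT] at hx; linarith [hx.1]
    have cl : ContinuousOn Real.log (Set.uIcc 1 T) := Real.continuousOn_log.mono fun x hx => (sub x hx).ne'
    have ce : ContinuousOn (fun x : ℝ => Complex.exp (-(a * Complex.I) * x)) (Set.uIcc 1 T) := Continuous.continuousOn (by fun_prop)
    have i1 : IntervalIntegrable (fun x : ℝ => Complex.exp (-(a * Complex.I) * x) * ((Real.log x / x : ℝ) : ℂ)) volume 1 T :=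
      (ce.mul (Complex.continuous_ofReal.comp_continuousOn (cl.div continuousOn_id fun x hx => (sub x hx).ne'))).intervalIntegrable
    have := Complex.reCLM.intervalIntegral_comp_comm i1
    refine Eq.trans this.symm ?_
    congr 1; ext x
    rw [Complex.reCLM_apply, Complex.re_mul_ofReal]
    simp [Complex.exp_re, mul_div_assoc]
end
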